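/- arXiv:1311.4905 — 3 statements merged into one kernel-verified Lean document; each statement's English description precedes it below -/
import Mathlib

section
/- Fix integers j ≥ 1, k ≥ 1 and n ≥ 1. For every ε > 0 there exists Q such that for every prime power q ≥ Q and every finite field F_q with q elements, | q^{-n} · Σ_{f ∈ M_n} Λ_j(f)·Λ_k(f) − Σ_{d=1}^{n} (d^j − (d−1)^j)(d^k − (d−1)^k) | < ε. (That is, lim_{q→∞} q^{-n} Σ_{f ∈ M_n} Λ_j(f)Λ_k(f) = Σ_{d=1}^{n} (d^j−(d−1)^j)(d^k−(d−1)^k).) -/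
open Polynomial

/-- The von Mangoldt function on `F_q[T]`: `Λ(f) = deg P` if `f = c·P^k` with `c ≠ 0`,
`P` monic irreducible and `k ≥ 1`, and `Λ(f) = 0` otherwise. -/
noncomputable def polyVM {F : Type*} [Field F] (f : F[X]) : ℕ :=
  sSup {m : ℕ | ∃ (c : F) (P : F[X]) (k : ℕ),
    c ≠ 0 ∧ P.Monic ∧ Irreducible P ∧ 1 ≤ k ∧ f = C c * P ^ k ∧ m = P.natDegree}

/- The higher-order von Mangoldt functions: `Λ_0(f) = 1` iff `f` is a nonzero constant,
`Λ_1 = Λ`, and `Λ_j(f) = Σ'_{d ∣ f} Λ_{j-1}(d) Λ(f/d) + Λ_{j-1}(f)·deg f` for `j ≥ 2`,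
the sum being over monic divisors `d` of `f`. -/
open Classical in
noncomputable def polyVMJ {F : Type*} [Field F] : ℕ → F[X] → ℕ
  | 0 => fun f => if f ≠ 0 ∧ f.natDegree = 0 then 1 else 0
  | 1 => fun f => polyVM f
  | (j + 2) => fun f =>
      (∑ᶠ d ∈ {d : F[X] | d.Monic ∧ d ∣ f}, polyVMJ (j + 1) d * polyVM (f / d))
        + polyVMJ (j + 1) f * f.natDegree

/-!
Write `H_u(f) = ∑_{ab = f} μ(a) u^{deg b}`. On a squarefree `f`, the product `H_u(f) H_v(f)` equals
`∏_{P ∣ f} (u^{deg P} - 1) (v^{deg P} - 1)`, and there it agrees with the convolution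
`G = 1 ⋆ μ u^deg ⋆ μ v^deg ⋆ (uv)^deg`. The generating function of `G` over the monic polynomials is
`(1 - quX) (1 - qvX) / ((1 - qX) (1 - quvX)) = 1 + (1 - u) (1 - v) qX / ((1 - qX) (1 - quvX))`, so
`∑_{f ∈ M_n} G(f) = qⁿ ∑_{d=1}^n (u^d - u^{d-1}) (v^d - v^{d-1})` for `n ≥ 1`. There are
`O(q^{n-1})` polynomials in `M_n` that are not squarefree, and `H_u H_v - G` is bounded on `M_n`
independently of `q`, so the mean of `H_u H_v` is known up to `O(1/q)`. On monic polynomials `Λ_j`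
is `μ ⋆ deg^j`, and `m ↦ m^j` restricted to `{0, …, n}` is a linear combination of geometric
sequences `m ↦ u^m`, so the result for `Λ_j` and `Λ_k` follows by bilinearity.
-/

section

open UniqueFactorizationMonoid Finset
open scoped Classical

section UniqueFactorization

variable {F : Type*} [Field F]

theorem monic_of_mem_normalizedFactors {f P : F[X]} (hP : P ∈ normalizedFactors f) : P.Monic := by
  have hf : f ≠ 0 := by rintro rfl; simp at hP
  exact ((Polynomial.mem_normalizedFactors_iff hf).1 hP).2.1

theorem irreducible_and_monic_of_mem_primeFactors {f P : F[X]} (hP : P ∈ primeFactors f) :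
    Irreducible P ∧ P.Monic :=
  have hP := mem_primeFactors.1 hP
  ⟨irreducible_of_normalized_factor P hP, monic_of_mem_normalizedFactors hP⟩

theorem prod_normalizedFactors_of_monic {f : F[X]} (hf : f.Monic) :
    (normalizedFactors f).prod = f := by
  rw [prod_normalizedFactors_eq, hf.normalize_eq_self]
  exact hf.ne_zero

theorem natDegree_eq_sum_normalizedFactors {f : F[X]} (hf : f.Monic) :
    f.natDegree = ((normalizedFactors f).map natDegree).sum := by
  conv_lhs => rw [← prod_normalizedFactors_of_monic hf]
  exact natDegree_multiset_prod_of_monic _ fun P hP ↦ monic_of_mem_normalizedFactors hP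

theorem card_normalizedFactors_le_natDegree {f : F[X]} (hf : f.Monic) :
    (normalizedFactors f).card ≤ f.natDegree := by
  rw [natDegree_eq_sum_normalizedFactors hf]
  have h := Multiset.card_nsmul_le_sum (s := (normalizedFactors f).map natDegree) (a := 1)
    (by
      simp only [Multiset.mem_map, forall_exists_index, and_imp, forall_apply_eq_imp_iff₂]
      exact fun P hP ↦ (irreducible_of_normalized_factor P hP).natDegree_pos)
  simpa using h

theorem normalizedFactors_finset_prod {T : Finset F[X]} (hT : ∀ P ∈ T, Irreducible P ∧ P.Monic) :
    normalizedFactors (∏ P ∈ T, P) = T.val := by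
  rw [prod_eq_multiset_prod, Multiset.map_id',
    normalizedFactors_prod_eq T.val fun P hP ↦ (hT P hP).1]
  exact (Multiset.map_congr rfl fun P hP ↦ (hT P hP).2.normalize_eq_self).trans (Multiset.map_id' _)

theorem primeFactors_finset_prod {T : Finset F[X]} (hT : ∀ P ∈ T, Irreducible P ∧ P.Monic) :
    primeFactors (∏ P ∈ T, P) = T := by
  ext P
  rw [mem_primeFactors, normalizedFactors_finset_prod hT, mem_val]

theorem squarefree_finset_prod {T : Finset F[X]} (hT : ∀ P ∈ T, Irreducible P ∧ P.Monic) :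
    Squarefree (∏ P ∈ T, P) := by
  rw [squarefree_iff_nodup_normalizedFactors (prod_ne_zero_iff.2 fun P hP ↦ (hT P hP).1.ne_zero),
    normalizedFactors_finset_prod hT]
  exact T.nodup

theorem prod_primeFactors_of_squarefree {f : F[X]} (hf : f.Monic) (hs : Squarefree f) :
    ∏ P ∈ primeFactors f, P = f := by
  rw [prod_eq_multiset_prod, Multiset.map_id', primeFactors_val_eq_normalizedFactors hs.isRadical,
    prod_normalizedFactors_of_monic hf]

theorem pow_dvd_iff_le_count_normalizedFactors {f P : F[X]} (hf : f ≠ 0) (hP : Irreducible P)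
    (hm : P.Monic) {k : ℕ} : P ^ k ∣ f ↔ k ≤ (normalizedFactors f).count P := by
  rw [dvd_iff_normalizedFactors_le_normalizedFactors (pow_ne_zero k hP.ne_zero) hf,
    hP.normalizedFactors_pow, hm.normalize_eq_self, Multiset.le_count_iff_replicate_le]

end UniqueFactorization

section MonicFactorizations

variable {F : Type*} [Field F]

theorem monicFactorizations_subset (f : F[X]) :
    {p : F[X] × F[X] | p.1.Monic ∧ p.2.Monic ∧ p.1 * p.2 = f} ⊆
      ((normalizedFactors f).powerset.toFinset.image
        fun s ↦ (s.prod, (normalizedFactors f - s).prod) : Finset (F[X] × F[X])) := by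
  rintro ⟨a, b⟩ ⟨ha, hb, rfl⟩
  have hadd := normalizedFactors_mul ha.ne_zero hb.ne_zero
  simp only [coe_image, Set.mem_image, mem_coe, Multiset.mem_toFinset, Multiset.mem_powerset]
  refine ⟨normalizedFactors a, hadd ▸ Multiset.le_add_right _ _, ?_⟩
  rw [hadd, add_tsub_cancel_left, prod_normalizedFactors_of_monic ha,
    prod_normalizedFactors_of_monic hb]

/-- The pairs of monic polynomials with product `f`, the analogue of `Nat.divisorsAntidiagonal`.
It is empty when `f` is not monic. -/
noncomputable def monicFactorizations (f : F[X]) : Finset (F[X] × F[X]) :=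
  ((finite_toSet _).subset (monicFactorizations_subset f)).toFinset

@[simp]
theorem mem_monicFactorizations {f : F[X]} {p : F[X] × F[X]} :
    p ∈ monicFactorizations f ↔ p.1.Monic ∧ p.2.Monic ∧ p.1 * p.2 = f := by
  simp [monicFactorizations]

theorem card_monicFactorizations_le {f : F[X]} (hf : f.Monic) :
    #(monicFactorizations f) ≤ 2 ^ f.natDegree :=
  calc #(monicFactorizations f)
      ≤ #((normalizedFactors f).powerset.toFinset.image
          fun s ↦ (s.prod, (normalizedFactors f - s).prod)) :=
        card_le_card fun _ hp ↦ monicFactorizations_subset f (mem_monicFactorizations.1 hp)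
    _ ≤ (normalizedFactors f).powerset.card := card_image_le.trans (Multiset.toFinset_card_le _)
    _ = 2 ^ (normalizedFactors f).card := Multiset.card_powerset _
    _ ≤ 2 ^ f.natDegree :=
        Nat.pow_le_pow_right two_pos (card_normalizedFactors_le_natDegree hf)

theorem exists_mem_monicFactorizations {f a : F[X]} (hf : f.Monic) (ha : a.Monic) (h : a ∣ f) :
    ∃ b, (a, b) ∈ monicFactorizations f := by
  obtain ⟨b, rfl⟩ := h
  exact ⟨b, mem_monicFactorizations.2 ⟨ha, ha.of_mul_monic_left hf, rfl⟩⟩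

theorem snd_eq_div_of_mem_monicFactorizations {f : F[X]} {p : F[X] × F[X]}
    (hp : p ∈ monicFactorizations f) : p.2 = f / p.1 := by
  obtain ⟨hp₁, -, rfl⟩ := mem_monicFactorizations.1 hp
  exact (mul_div_cancel_left₀ _ hp₁.ne_zero).symm

theorem mk_div_mem_monicFactorizations {f a : F[X]} (hf : f.Monic) (ha : a.Monic) (h : a ∣ f) :
    (a, f / a) ∈ monicFactorizations f := by
  obtain ⟨b, hb⟩ := exists_mem_monicFactorizations hf ha h
  rwa [← snd_eq_div_of_mem_monicFactorizations hb]

theorem eq_of_mem_monicFactorizations {f : F[X]} {p r : F[X] × F[X]}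
    (hp : p ∈ monicFactorizations f) (hr : r ∈ monicFactorizations f) (h : p.1 = r.1) : p = r :=
  Prod.ext h <| by
    rw [snd_eq_div_of_mem_monicFactorizations hp, snd_eq_div_of_mem_monicFactorizations hr, h]

theorem natDegree_add_of_mem_monicFactorizations {f : F[X]} {p : F[X] × F[X]}
    (hp : p ∈ monicFactorizations f) : p.1.natDegree + p.2.natDegree = f.natDegree := by
  obtain ⟨h₁, h₂, rfl⟩ := mem_monicFactorizations.1 hp
  exact (h₁.natDegree_mul h₂).symm

end MonicFactorizations

section DirichletConv

variable {F R : Type*} [Field F] [CommSemiring R]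

/-- The Dirichlet convolution of two functions on the monic polynomials over `F`. Such functions
are encoded as functions on all of `F[X]`, of which only the values at monic arguments matter. -/
noncomputable def dirichletConv (α β : F[X] → R) (f : F[X]) : R :=
  ∑ p ∈ monicFactorizations f, α p.1 * β p.2

theorem dirichletConv_congr {α α' β β' : F[X] → R} (hα : ∀ a : F[X], a.Monic → α a = α' a)
    (hβ : ∀ b : F[X], b.Monic → β b = β' b) : dirichletConv α β = dirichletConv α' β' := by
  ext f
  refine sum_congr rfl fun p hp ↦ ?_
  obtain ⟨h₁, h₂, -⟩ := mem_monicFactorizations.1 hp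
  rw [hα _ h₁, hβ _ h₂]

theorem dirichletConv_comm (α β : F[X] → R) : dirichletConv α β = dirichletConv β α := by
  ext f
  refine sum_nbij' Prod.swap Prod.swap ?_ ?_ (fun _ _ ↦ rfl) (fun _ _ ↦ rfl)
    fun _ _ ↦ mul_comm _ _
  all_goals
    simp only [mem_monicFactorizations, Prod.fst_swap, Prod.snd_swap]
    rintro p ⟨h₁, h₂, h⟩
    exact ⟨h₂, h₁, mul_comm p.1 p.2 ▸ h⟩

theorem dirichletConv_assoc (α β γ : F[X] → R) :
    dirichletConv (dirichletConv α β) γ = dirichletConv α (dirichletConv β γ) := by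
  ext f
  simp only [dirichletConv, sum_mul, mul_sum, sum_sigma']
  refine sum_nbij' (fun y ↦ ⟨(y.2.1, y.2.2 * y.1.2), (y.2.2, y.1.2)⟩)
    (fun y ↦ ⟨(y.1.1 * y.2.1, y.2.2), (y.1.1, y.2.1)⟩) ?_ ?_ ?_ ?_ fun _ _ ↦ mul_assoc _ _ _
  all_goals
    simp only [mem_sigma, mem_monicFactorizations, and_imp, Sigma.forall, Prod.forall]
    rintro a b c d ha hb rfl hc hd rfl
  · exact ⟨⟨hc, hd.mul hb, (mul_assoc c d b).symm⟩, hd, hb, trivial⟩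
  · exact ⟨⟨ha.mul hc, hd, mul_assoc a c d⟩, ha, hc, trivial⟩
  all_goals rfl

theorem dirichletConv_eq_of_unit_left {ε : F[X] → R}
    (hε : ∀ a : F[X], a.Monic → ε a = if a = 1 then 1 else 0) (α : F[X] → R) {f : F[X]}
    (hf : f.Monic) : dirichletConv ε α f = α f := by
  have h1f : ((1 : F[X]), f) ∈ monicFactorizations f := by simp [monic_one, hf]
  rw [dirichletConv, sum_eq_single_of_mem (1, f) h1f fun p hp hne ↦ ?_]
  · simp [hε 1 monic_one]
  · have hp₁ : p.1 ≠ 1 := fun h ↦ hne (eq_of_mem_monicFactorizations hp h1f h)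
    rw [hε _ (mem_monicFactorizations.1 hp).1, if_neg hp₁, zero_mul]

end DirichletConv

section SquarefreeFactors

variable {F R : Type*} [Field F]

theorem sum_monicFactorizations_eq_sum_powerset [AddCommMonoid R] {f : F[X]} (hf : f.Monic)
    (g : F[X] × F[X] → R) (hg : ∀ p ∈ monicFactorizations f, ¬ Squarefree p.1 → g p = 0) :
    ∑ p ∈ monicFactorizations f, g p =
      ∑ S ∈ (primeFactors f).powerset, g (∏ P ∈ S, P, f / ∏ P ∈ S, P) := by
  have hirr : ∀ S ∈ (primeFactors f).powerset, ∀ P ∈ S, Irreducible P ∧ P.Monic :=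
    fun S hS P hP ↦ irreducible_and_monic_of_mem_primeFactors (mem_powerset.1 hS hP)
  refine (sum_of_injOn (fun S ↦ (∏ P ∈ S, P, f / ∏ P ∈ S, P)) ?_ ?_ ?_ fun _ _ ↦ rfl).symm
  · intro S hS S' hS' h
    rw [← primeFactors_finset_prod (hirr S hS), ← primeFactors_finset_prod (hirr S' hS')]
    exact congrArg (fun p ↦ primeFactors p.1) h
  · intro S hS
    have hdvd : ∏ P ∈ S, P ∣ f :=
      (prod_dvd_prod_of_subset _ _ _ (mem_powerset.1 hS)).trans radical_dvd_self
    exact mk_div_mem_monicFactorizations hf (monic_prod_of_monic _ _ fun P hP ↦ (hirr S hS P hP).2)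
      hdvd
  · intro p hp hnot
    refine hg p hp fun hsq ↦ hnot ⟨primeFactors p.1, ?_, ?_⟩
    · obtain ⟨h₁, h₂, rfl⟩ := mem_monicFactorizations.1 hp
      rw [mem_coe, mem_powerset, primeFactors_mul_eq_union h₁.ne_zero h₂.ne_zero]
      exact subset_union_left
    · simp only [prod_primeFactors_of_squarefree (mem_monicFactorizations.1 hp).1 hsq,
        ← snd_eq_div_of_mem_monicFactorizations hp]

variable [CommSemiring R]

/-- A function on the monic polynomials is squarefree-multiplicative if its value at a product of
distinct monic irreducible polynomials is the product of its values at the factors. -/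
def SquarefreeMultiplicative (α : F[X] → R) : Prop :=
  ∀ T : Finset F[X], (∀ P ∈ T, Irreducible P ∧ P.Monic) → α (∏ P ∈ T, P) = ∏ P ∈ T, α P

namespace SquarefreeMultiplicative

theorem mul {α β : F[X] → R} (hα : SquarefreeMultiplicative α) (hβ : SquarefreeMultiplicative β) :
    SquarefreeMultiplicative (α * β) := fun T hT ↦ by
  simp only [Pi.mul_apply, prod_mul_distrib, hα T hT, hβ T hT]

theorem dirichletConv_finset_prod {α β : F[X] → R} (hα : SquarefreeMultiplicative α)
    (hβ : SquarefreeMultiplicative β) {T : Finset F[X]} (hT : ∀ P ∈ T, Irreducible P ∧ P.Monic) :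
    dirichletConv α β (∏ P ∈ T, P) = ∏ P ∈ T, (α P + β P) := by
  have hmonic : (∏ P ∈ T, P).Monic := monic_prod_of_monic _ _ fun P hP ↦ (hT P hP).2
  rw [dirichletConv, sum_monicFactorizations_eq_sum_powerset hmonic, primeFactors_finset_prod hT,
    prod_add]
  · refine sum_congr rfl fun S hS ↦ ?_
    have hS' := mem_powerset.1 hS
    have hS₀ : ∏ P ∈ S, P ≠ 0 := prod_ne_zero_iff.2 fun P hP ↦ (hT P (hS' hP)).1.ne_zero
    have hdiv : (∏ P ∈ T, P) / ∏ P ∈ S, P = ∏ P ∈ T \ S, P := by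
      rw [← prod_sdiff hS', mul_div_cancel_right₀ _ hS₀]
    rw [hdiv, hα S fun P hP ↦ hT P (hS' hP), hβ (T \ S) fun P hP ↦ hT P (sdiff_subset hP)]
  · intro p hp hsq
    refine absurd ((squarefree_finset_prod hT).squarefree_of_dvd ?_) hsq
    exact (mem_monicFactorizations.1 hp).2.2 ▸ dvd_mul_right p.1 p.2

theorem dirichletConv_irreducible {α β : F[X] → R} (hα : SquarefreeMultiplicative α)
    (hβ : SquarefreeMultiplicative β) {P : F[X]} (hP : Irreducible P) (hm : P.Monic) :
    dirichletConv α β P = α P + β P := by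
  simpa using hα.dirichletConv_finset_prod hβ (T := {P}) (by simp [hP, hm])

protected theorem dirichletConv {α β : F[X] → R} (hα : SquarefreeMultiplicative α)
    (hβ : SquarefreeMultiplicative β) : SquarefreeMultiplicative (dirichletConv α β) := by
  intro T hT
  rw [hα.dirichletConv_finset_prod hβ hT]
  exact prod_congr rfl fun P hP ↦
    (hα.dirichletConv_irreducible hβ (hT P hP).1 (hT P hP).2).symm

theorem eq_of_eq_on_irreducible {α β : F[X] → R} (hα : SquarefreeMultiplicative α)
    (hβ : SquarefreeMultiplicative β) (h : ∀ P : F[X], Irreducible P → P.Monic → α P = β P)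
    {f : F[X]} (hf : f.Monic) (hs : Squarefree f) : α f = β f := by
  have hirr : ∀ P ∈ primeFactors f, Irreducible P ∧ P.Monic :=
    fun P hP ↦ irreducible_and_monic_of_mem_primeFactors hP
  rw [← prod_primeFactors_of_squarefree hf hs, hα _ hirr, hβ _ hirr]
  exact prod_congr rfl fun P hP ↦ h P (hirr P hP).1 (hirr P hP).2

end SquarefreeMultiplicative

end SquarefreeFactors

section Moebius

variable {F R : Type*} [Field F]

/-- The completely multiplicative function `f ↦ u ^ deg f`. -/
def degPow [Monoid R] (u : R) (f : F[X]) : R := u ^ f.natDegree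

/-- The function `f ↦ μ(f) * u ^ deg f`, the Dirichlet inverse of `degPow u`. -/
noncomputable def moebiusTwist [Ring R] (u : R) (f : F[X]) : R := moebius f * u ^ f.natDegree

theorem degPow_squarefreeMultiplicative [CommSemiring R] (u : R) :
    SquarefreeMultiplicative (degPow u : F[X] → R) := fun T hT ↦ by
  simp only [degPow, natDegree_prod_of_monic T _ fun P hP ↦ (hT P hP).2, prod_pow_eq_pow_sum]

theorem moebius_finset_prod {T : Finset F[X]} (hT : ∀ P ∈ T, Irreducible P ∧ P.Monic) :
    moebius (∏ P ∈ T, P) = (-1) ^ #T := by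
  have hcard : (factors (∏ P ∈ T, P)).card = #T := by
    rw [← Multiset.card_map normalize, ← normalizedFactors, normalizedFactors_finset_prod hT,
      card_val]
  rw [(squarefree_finset_prod hT).moebius_eq, hcard]

theorem sum_moebius_monicFactorizations {f : F[X]} (hf : f.Monic) :
    ∑ p ∈ monicFactorizations f, moebius p.1 = if f = 1 then 1 else 0 := by
  have hempty : primeFactors f = ∅ ↔ f = 1 := by
    rw [primeFactors_eq_empty_iff hf.ne_zero, hf.isUnit_iff]
  rw [sum_monicFactorizations_eq_sum_powerset hf _ fun p _ h ↦ moebius_of_not_squarefree h]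
  simp only [← hempty, ← sum_powerset_neg_one_pow_card]
  exact sum_congr rfl fun S hS ↦ moebius_finset_prod fun P hP ↦
    irreducible_and_monic_of_mem_primeFactors (mem_powerset.1 hS hP)

variable [CommRing R]

theorem moebiusTwist_irreducible (u : R) {P : F[X]} (hP : Irreducible P) :
    moebiusTwist u P = -u ^ P.natDegree := by
  simp [moebiusTwist, hP.moebius_eq]

theorem moebiusTwist_squarefreeMultiplicative (u : R) :
    SquarefreeMultiplicative (moebiusTwist u : F[X] → R) := fun T hT ↦ by
  rw [prod_congr rfl fun P hP ↦ moebiusTwist_irreducible u (hT P hP).1, prod_neg,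
    moebiusTwist, moebius_finset_prod hT, natDegree_prod_of_monic T _ fun P hP ↦ (hT P hP).2,
    prod_pow_eq_pow_sum, Int.cast_pow, Int.cast_neg, Int.cast_one]

theorem dirichletConv_moebiusTwist_degPow (u : R) {f : F[X]} (hf : f.Monic) :
    dirichletConv (moebiusTwist u) (degPow u) f = if f = 1 then 1 else 0 :=
  calc dirichletConv (moebiusTwist u) (degPow u) f
      = ∑ p ∈ monicFactorizations f, (moebius p.1 : R) * u ^ f.natDegree := by
        refine sum_congr rfl fun p hp ↦ ?_
        rw [moebiusTwist, degPow, ← natDegree_add_of_mem_monicFactorizations hp, pow_add, mul_assoc]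
    _ = ((∑ p ∈ monicFactorizations f, moebius p.1 : ℤ) : R) * u ^ f.natDegree := by
        rw [Int.cast_sum, sum_mul]
    _ = if f = 1 then 1 else 0 := by
        rw [sum_moebius_monicFactorizations hf]
        split_ifs with h <;> simp [h]

theorem eq_dirichletConv_moebiusTwist {α β : F[X] → R} (u : R)
    (h : ∀ f : F[X], f.Monic → dirichletConv α (degPow u) f = β f) {f : F[X]} (hf : f.Monic) :
    α f = dirichletConv (moebiusTwist u) β f := by
  rw [← dirichletConv_congr (fun _ _ ↦ rfl) h, dirichletConv_comm α, ← dirichletConv_assoc,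
    dirichletConv_eq_of_unit_left (fun a ha ↦ dirichletConv_moebiusTwist_degPow u ha) α hf]

end Moebius

section VonMangoldt

variable {F : Type*} [Field F]

theorem eq_and_eq_of_pow_eq_pow {P Q : F[X]} (hP : Irreducible P) (hPm : P.Monic)
    (hQ : Irreducible Q) (hQm : Q.Monic) {k l : ℕ} (hk : k ≠ 0) (h : P ^ k = Q ^ l) :
    P = Q ∧ k = l := by
  have hdvd : P ∣ Q := hP.prime.dvd_of_dvd_pow (h ▸ dvd_pow_self P hk)
  obtain rfl := eq_of_monic_of_associated hPm hQm (hP.associated_of_dvd hQ hdvd)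
  exact ⟨rfl, pow_injective_of_not_isUnit hP.not_isUnit hP.ne_zero h⟩

theorem eq_one_of_monic_C_mul {c : F} {f : F[X]} (hf : f.Monic) (h : (C c * f).Monic) : c = 1 := by
  simpa [hf.leadingCoeff] using h.leadingCoeff

theorem polyVM_pow {P : F[X]} (hP : Irreducible P) (hm : P.Monic) {k : ℕ} (hk : k ≠ 0) :
    polyVM (P ^ k) = P.natDegree := by
  suffices {m : ℕ | ∃ (c : F) (Q : F[X]) (l : ℕ), c ≠ 0 ∧ Q.Monic ∧ Irreducible Q ∧ 1 ≤ l ∧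
      P ^ k = C c * Q ^ l ∧ m = Q.natDegree} = {P.natDegree} by
    rw [polyVM, this, csSup_singleton]
  refine Set.eq_singleton_iff_unique_mem.2
    ⟨⟨1, P, k, one_ne_zero, hm, hP, Nat.one_le_iff_ne_zero.2 hk, by simp, rfl⟩, ?_⟩
  rintro _ ⟨c, Q, l, -, hQm, hQ, -, h, rfl⟩
  obtain rfl := eq_one_of_monic_C_mul (hQm.pow l) (h ▸ hm.pow k)
  rw [map_one, one_mul] at h
  rw [(eq_and_eq_of_pow_eq_pow hP hm hQ hQm hk h).1]

theorem exists_eq_pow_of_polyVM_ne_zero {f : F[X]} (hf : f.Monic) (h : polyVM f ≠ 0) :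
    ∃ (P : F[X]) (k : ℕ), Irreducible P ∧ P.Monic ∧ k ≠ 0 ∧ f = P ^ k := by
  rw [polyVM, ← Nat.bot_eq_zero, ← csSup_empty] at h
  obtain ⟨-, c, P, k, -, hm, hP, hk, rfl, -⟩ :=
    Set.nonempty_iff_ne_empty.2 (ne_of_apply_ne sSup h)
  rw [eq_one_of_monic_C_mul (hm.pow k) hf, map_one, one_mul]
  exact ⟨P, k, hP, hm, Nat.one_le_iff_ne_zero.1 hk, rfl⟩

theorem sum_polyVM_eq_sum_pow_dvd {f : F[X]} (hf : f.Monic) :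
    ∑ p ∈ monicFactorizations f, polyVM p.1 =
      ∑ x ∈ (primeFactors f).sigma fun P ↦ Icc 1 ((normalizedFactors f).count P),
        x.1.natDegree := by
  have hmem : ∀ {x : (_ : F[X]) × ℕ},
      x ∈ (primeFactors f).sigma (fun P ↦ Icc 1 ((normalizedFactors f).count P)) ↔
        Irreducible x.1 ∧ x.1.Monic ∧ x.2 ≠ 0 ∧ x.1 ^ x.2 ∣ f := by
    rintro ⟨P, k⟩
    simp only [mem_sigma, mem_Icc]
    constructor
    · rintro ⟨hP, hk, hle⟩
      obtain ⟨hP, hm⟩ := irreducible_and_monic_of_mem_primeFactors hP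
      exact ⟨hP, hm, by lia,
        (pow_dvd_iff_le_count_normalizedFactors hf.ne_zero hP hm).2 hle⟩
    · rintro ⟨hP, hm, hk, hdvd⟩
      rw [pow_dvd_iff_le_count_normalizedFactors hf.ne_zero hP hm] at hdvd
      exact ⟨mem_primeFactors.2 (Multiset.count_pos.1 (by lia)), by lia, hdvd⟩
  refine (sum_of_injOn (fun x ↦ (x.1 ^ x.2, f / x.1 ^ x.2)) ?_ ?_ ?_ ?_).symm
  · rintro ⟨P, k⟩ hx ⟨Q, l⟩ hy h
    obtain ⟨hP, hPm, hk, -⟩ := hmem.1 hx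
    obtain ⟨hQ, hQm, -, -⟩ := hmem.1 hy
    obtain ⟨rfl, rfl⟩ := eq_and_eq_of_pow_eq_pow hP hPm hQ hQm hk (congrArg Prod.fst h)
    rfl
  · intro x hx
    obtain ⟨-, hm, -, hdvd⟩ := hmem.1 hx
    exact mk_div_mem_monicFactorizations hf (hm.pow x.2) hdvd
  · intro p hp hnot
    by_contra h
    obtain ⟨hp₁, -, hpf⟩ := mem_monicFactorizations.1 hp
    obtain ⟨P, k, hP, hm, hk, hpk⟩ := exists_eq_pow_of_polyVM_ne_zero hp₁ h
    refine hnot ⟨⟨P, k⟩, hmem.2 ⟨hP, hm, hk, hpk ▸ Dvd.intro _ hpf⟩, ?_⟩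
    simp only [← hpk, ← snd_eq_div_of_mem_monicFactorizations hp]
  · intro x hx
    obtain ⟨hP, hm, hk, -⟩ := hmem.1 hx
    exact (polyVM_pow hP hm hk).symm

theorem sum_polyVM_monicFactorizations {f : F[X]} (hf : f.Monic) :
    ∑ p ∈ monicFactorizations f, polyVM p.1 = f.natDegree := by
  rw [sum_polyVM_eq_sum_pow_dvd hf, sum_sigma, natDegree_eq_sum_normalizedFactors hf,
    sum_multiset_map_count, ← toFinset_normalizedFactors]
  simp

theorem polyVMJ_zero_of_monic {f : F[X]} (hf : f.Monic) :
    polyVMJ 0 f = if f = 1 then 1 else 0 := by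
  simp [polyVMJ, hf.ne_zero, hf.natDegree_eq_zero]

theorem finsum_monic_dvd_eq_sum {R : Type*} [AddCommMonoid R] {f : F[X]} (hf : f.Monic)
    (g : F[X] → F[X] → R) :
    ∑ᶠ d ∈ {d : F[X] | d.Monic ∧ d ∣ f}, g d (f / d) =
      ∑ p ∈ monicFactorizations f, g p.1 p.2 := by
  have hset : {d : F[X] | d.Monic ∧ d ∣ f} = (monicFactorizations f).image Prod.fst := by
    ext d
    simp only [Set.mem_ofPred_eq, coe_image, Set.mem_image, mem_coe]
    constructor
    · exact fun ⟨hd, hdvd⟩ ↦ ⟨_, mk_div_mem_monicFactorizations hf hd hdvd, rfl⟩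
    · rintro ⟨p, hp, rfl⟩
      obtain ⟨h₁, -, rfl⟩ := mem_monicFactorizations.1 hp
      exact ⟨h₁, dvd_mul_right _ _⟩
  rw [hset, finsum_mem_coe_finset,
    sum_image fun p hp r hr h ↦ eq_of_mem_monicFactorizations hp hr h]
  exact sum_congr rfl fun p hp ↦ by rw [snd_eq_div_of_mem_monicFactorizations hp]

theorem polyVMJ_succ (j : ℕ) {f : F[X]} (hf : f.Monic) :
    polyVMJ (j + 1) f = dirichletConv (polyVMJ j) polyVM f + polyVMJ j f * f.natDegree := by
  cases j with
  | zero =>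
    rw [dirichletConv_eq_of_unit_left (fun a ha ↦ polyVMJ_zero_of_monic ha) _ hf,
      polyVMJ_zero_of_monic hf, polyVMJ]
    split_ifs with h <;> simp [h]
  | succ j =>
    exact congrArg (· + _) (finsum_monic_dvd_eq_sum hf fun a b ↦ polyVMJ (j + 1) a * polyVM b)

theorem dirichletConv_polyVMJ_one (j : ℕ) {f : F[X]} (hf : f.Monic) :
    dirichletConv (polyVMJ j) 1 f = f.natDegree ^ j := by
  induction j generalizing f with
  | zero =>
    rw [dirichletConv_eq_of_unit_left (fun a ha ↦ polyVMJ_zero_of_monic ha) _ hf, Pi.one_apply,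
      pow_zero]
  | succ j ih =>
    have hdeg : dirichletConv (polyVMJ j) (dirichletConv polyVM 1) f =
        dirichletConv (polyVMJ j) natDegree f :=
      congrFun (dirichletConv_congr (fun _ _ ↦ rfl) fun g hg ↦ by
        simpa [dirichletConv] using sum_polyVM_monicFactorizations hg) f
    calc dirichletConv (polyVMJ (j + 1)) 1 f
        = dirichletConv (dirichletConv (polyVMJ j) polyVM + fun g ↦ polyVMJ j g * g.natDegree)
            1 f :=
          congrFun (dirichletConv_congr (fun g hg ↦ polyVMJ_succ j hg) fun _ _ ↦ rfl) f
      _ = dirichletConv (polyVMJ j) natDegree f +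
            ∑ p ∈ monicFactorizations f, polyVMJ j p.1 * p.1.natDegree := by
          rw [← hdeg, ← dirichletConv_assoc]
          simp [dirichletConv, sum_add_distrib]
      _ = ∑ p ∈ monicFactorizations f, polyVMJ j p.1 * f.natDegree := by
          rw [dirichletConv, ← sum_add_distrib]
          refine sum_congr rfl fun p hp ↦ ?_
          rw [← mul_add, add_comm, natDegree_add_of_mem_monicFactorizations hp]
      _ = f.natDegree ^ (j + 1) := by
          rw [← sum_mul, pow_succ, ← ih hf]
          simp [dirichletConv]

/-- The generalised von Mangoldt function `f ↦ ∑ μ(a) φ(deg b)`, summed over the factorizations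
`f = a * b`. The weights `φ m = m ^ j` give `Λ_j`, geometric weights give multiplicative
functions. -/
noncomputable def weightedVonMangoldt {R : Type*} [CommRing R] (φ : ℕ → R) : F[X] → R :=
  dirichletConv (moebiusTwist 1) fun g ↦ φ g.natDegree

theorem polyVMJ_eq_weightedVonMangoldt {R : Type*} [CommRing R] (j : ℕ) {f : F[X]}
    (hf : f.Monic) : (polyVMJ j f : R) = weightedVonMangoldt (fun m ↦ (m : R) ^ j) f := by
  refine eq_dirichletConv_moebiusTwist (α := fun g ↦ (polyVMJ j g : R)) 1 (fun g hg ↦ ?_) hf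
  have h := congrArg (Nat.cast (R := R)) (dirichletConv_polyVMJ_one j hg)
  simpa [dirichletConv, degPow] using h

end VonMangoldt

section GeneratingFunction

open PowerSeries (coeff)

variable (F : Type*) {R : Type*} [Field F] [Fintype F]

/-- The finite set of monic polynomials of degree `n` over a finite field, written `M_n` in the
paper. -/
noncomputable def monicsOfDegree (n : ℕ) : Finset F[X] :=
  (Set.finite_coe_iff.1 (Finite.of_equiv _
    ((monicEquivDegreeLT n).trans (degreeLTEquiv F n).toEquiv).symm) :
      {f : F[X] | f.Monic ∧ f.natDegree = n}.Finite).toFinset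

variable {F}

@[simp]
theorem mem_monicsOfDegree {n : ℕ} {f : F[X]} :
    f ∈ monicsOfDegree F n ↔ f.Monic ∧ f.natDegree = n := by
  simp [monicsOfDegree]

variable (F) in
theorem card_monicsOfDegree (n : ℕ) : #(monicsOfDegree F n) = Fintype.card F ^ n := by
  have e : monicsOfDegree F n ≃ (Fin n → F) :=
    (Equiv.subtypeEquivRight fun _ ↦ mem_monicsOfDegree).trans
      ((monicEquivDegreeLT n).trans (degreeLTEquiv F n).toEquiv)
  simpa using Fintype.card_congr e

theorem sum_monicsOfDegree_dirichletConv [CommSemiring R] (α β : F[X] → R) (n : ℕ) :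
    ∑ f ∈ monicsOfDegree F n, dirichletConv α β f =
      ∑ x ∈ antidiagonal n,
        (∑ a ∈ monicsOfDegree F x.1, α a) * ∑ b ∈ monicsOfDegree F x.2, β b := by
  simp_rw [sum_mul_sum, dirichletConv, ← sum_product', sum_sigma']
  refine sum_nbij' (fun y ↦ ⟨(y.2.1.natDegree, y.2.2.natDegree), y.2⟩)
    (fun y ↦ ⟨y.2.1 * y.2.2, y.2⟩) ?_ ?_ ?_ ?_ fun _ _ ↦ rfl
  all_goals simp only [mem_sigma, mem_monicsOfDegree, mem_monicFactorizations,
    HasAntidiagonal.mem_antidiagonal, mem_product, and_imp, Sigma.forall, Prod.forall]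
  · rintro _ a b - rfl ha hb rfl
    exact ⟨(ha.natDegree_mul hb).symm, ⟨ha, trivial⟩, hb, trivial⟩
  · rintro _ _ a b rfl ha rfl hb rfl
    exact ⟨⟨ha.mul hb, ha.natDegree_mul hb⟩, ha, hb, trivial⟩
  · rintro _ a b - - - - rfl
    rfl
  · rintro _ _ a b - - rfl - rfl
    rfl

/-- The generating function `∑ₙ (∑_{f ∈ M_n} α f) Xⁿ` of a function on the monic polynomials. -/
noncomputable def monicGenFun [Semiring R] (α : F[X] → R) : PowerSeries R :=
  PowerSeries.mk fun n ↦ ∑ f ∈ monicsOfDegree F n, α f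

theorem coeff_monicGenFun [Semiring R] (α : F[X] → R) (n : ℕ) :
    coeff n (monicGenFun α) = ∑ f ∈ monicsOfDegree F n, α f :=
  PowerSeries.coeff_mk _ _

theorem monicGenFun_dirichletConv [CommSemiring R] (α β : F[X] → R) :
    monicGenFun (dirichletConv α β) = monicGenFun α * monicGenFun β := by
  ext n
  simp only [coeff_monicGenFun, PowerSeries.coeff_mul, sum_monicsOfDegree_dirichletConv]

theorem mk_pow_mul_one_sub [CommRing R] (a : R) :
    PowerSeries.mk (a ^ ·) * (1 - PowerSeries.C a * PowerSeries.X) = 1 := by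
  simpa [PowerSeries.rescale_mk, PowerSeries.rescale_X] using
    congrArg (PowerSeries.rescale a) (PowerSeries.mk_one_mul_one_sub_eq_one R)

variable (F) in
theorem monicGenFun_degPow [CommRing R] (u : R) :
    monicGenFun (degPow u : F[X] → R) = PowerSeries.mk ((Fintype.card F * u : R) ^ ·) := by
  ext n
  have hconst : ∀ f ∈ monicsOfDegree F n, degPow u f = u ^ n :=
    fun f hf ↦ by rw [degPow, (mem_monicsOfDegree.1 hf).2]
  rw [coeff_monicGenFun, PowerSeries.coeff_mk, sum_congr rfl hconst, sum_const,
    card_monicsOfDegree, nsmul_eq_mul, Nat.cast_pow, mul_pow]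

variable (F) in
theorem monicGenFun_moebiusTwist [CommRing R] (u : R) :
    monicGenFun (moebiusTwist u : F[X] → R) =
      1 - PowerSeries.C (Fintype.card F * u : R) * PowerSeries.X := by
  have hinv : monicGenFun (moebiusTwist u : F[X] → R) *
      monicGenFun (degPow u : F[X] → R) = 1 := by
    rw [← monicGenFun_dirichletConv]
    ext n
    have hone : ∀ f ∈ monicsOfDegree F n, dirichletConv (moebiusTwist u) (degPow u) f =
        if f = 1 then 1 else 0 :=
      fun f hf ↦ dirichletConv_moebiusTwist_degPow u (mem_monicsOfDegree.1 hf).1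
    rw [coeff_monicGenFun, sum_congr rfl hone, sum_ite_eq']
    simp [PowerSeries.coeff_one, monic_one, eq_comm]
  rw [monicGenFun_degPow] at hinv
  exact left_inv_eq_right_inv hinv (mk_pow_mul_one_sub _)

/-- The convolution `1 ⋆ μ u^deg ⋆ μ v^deg ⋆ (uv)^deg`, a model for the product of the generalised
von Mangoldt functions with weights `u ^ m` and `v ^ m` whose sum over `M_n` is explicit. -/
noncomputable def covarianceKernel [CommRing R] (u v : R) : F[X] → R :=
  dirichletConv (dirichletConv (degPow 1) (moebiusTwist u))
    (dirichletConv (moebiusTwist v) (degPow (u * v)))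

variable (F) in
theorem monicGenFun_covarianceKernel [CommRing R] (u v : R) :
    monicGenFun (covarianceKernel u v : F[X] → R) =
      1 + PowerSeries.C ((1 - u) * (1 - v) * Fintype.card F) * PowerSeries.X *
        (PowerSeries.mk ((Fintype.card F * (u * v) : R) ^ ·) *
          PowerSeries.mk ((Fintype.card F : R) ^ ·)) := by
  have hq := mk_pow_mul_one_sub (Fintype.card F : R)
  have hquv := mk_pow_mul_one_sub (Fintype.card F * (u * v) : R)
  simp only [covarianceKernel, monicGenFun_dirichletConv, monicGenFun_degPow,
    monicGenFun_moebiusTwist, mul_one, map_mul, map_sub, map_one] at hq hquv ⊢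
  generalize (PowerSeries.mk fun n ↦ (Fintype.card F : R) ^ n) = A at hq ⊢
  generalize (PowerSeries.mk fun n ↦ (Fintype.card F * (u * v) : R) ^ n) = B at hquv ⊢
  linear_combination A * (1 - PowerSeries.C (Fintype.card F : R) * PowerSeries.X) * hquv + hq

variable (F) in
theorem sum_covarianceKernel [CommRing R] (u v : R) {n : ℕ} (hn : n ≠ 0) :
    ∑ f ∈ monicsOfDegree F n, covarianceKernel u v f =
      (Fintype.card F : R) ^ n *
        ∑ d ∈ Icc 1 n, (u ^ d - u ^ (d - 1)) * (v ^ d - v ^ (d - 1)) := by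
  obtain ⟨n, rfl⟩ := Nat.exists_eq_add_one_of_ne_zero hn
  rw [← coeff_monicGenFun, monicGenFun_covarianceKernel, map_add, PowerSeries.coeff_one,
    if_neg hn, zero_add, mul_assoc, PowerSeries.coeff_C_mul, PowerSeries.coeff_succ_X_mul,
    PowerSeries.coeff_mul, Nat.sum_antidiagonal_eq_sum_range_succ_mk,
    ← Ico_add_one_right_eq_Icc, sum_Ico_eq_sum_range, mul_sum, mul_sum]
  refine sum_congr rfl fun i hi ↦ ?_
  obtain ⟨m, rfl⟩ := Nat.exists_eq_add_of_le (Nat.lt_succ_iff.1 (mem_range.1 hi))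
  simp only [PowerSeries.coeff_mk, add_tsub_cancel_left]
  ring

end GeneratingFunction

section Squarefree

variable {F : Type*} [Field F]

theorem exists_eq_mul_self_mul_of_not_squarefree {f : F[X]} (hf : f.Monic) (h : ¬ Squarefree f) :
    ∃ b c : F[X], b.Monic ∧ c.Monic ∧ b.natDegree ≠ 0 ∧ f = b * b * c := by
  rw [squarefree_iff_irreducible_sq_not_dvd_of_ne_zero hf.ne_zero] at h
  push Not at h
  obtain ⟨x, hx, hdvd⟩ := h
  have hb : (normalize x).Monic := monic_normalize hx.ne_zero
  obtain ⟨c, hc⟩ := ((normalize_associated x).mul_mul (normalize_associated x)).dvd.trans hdvd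
  exact ⟨normalize x, c, hb, (hb.mul hb).of_mul_monic_left (hc ▸ hf),
    ((normalize_associated x).symm.irreducible hx).natDegree_pos.ne', hc⟩

variable [Fintype F]

variable (F) in
theorem filter_not_squarefree_monicsOfDegree_subset (n : ℕ) :
    {f ∈ monicsOfDegree F n | ¬ Squarefree f} ⊆ {i ∈ Icc 1 n | 2 * i ≤ n}.biUnion fun i ↦
      (monicsOfDegree F i ×ˢ monicsOfDegree F (n - 2 * i)).image fun p ↦ p.1 * p.1 * p.2 := by
  intro f hf
  simp only [mem_filter, mem_monicsOfDegree] at hf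
  obtain ⟨⟨hm, rfl⟩, hs⟩ := hf
  obtain ⟨b, c, hb, hc, hdeg, rfl⟩ := exists_eq_mul_self_mul_of_not_squarefree hm hs
  have hadd : (b * b * c).natDegree = b.natDegree + b.natDegree + c.natDegree := by
    rw [(hb.mul hb).natDegree_mul hc, hb.natDegree_mul hb]
  simp only [mem_biUnion, mem_image, mem_filter, mem_Icc, mem_product, mem_monicsOfDegree]
  exact ⟨b.natDegree, by lia, (b, c), ⟨⟨hb, rfl⟩, hc, by lia⟩, rfl⟩

variable (F) in
theorem card_mul_card_not_squarefree_le (n : ℕ) :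
    Fintype.card F * #{f ∈ monicsOfDegree F n | ¬ Squarefree f} ≤ n * Fintype.card F ^ n := by
  set q := Fintype.card F
  calc q * #{f ∈ monicsOfDegree F n | ¬ Squarefree f}
      ≤ q * ∑ i ∈ Icc 1 n with 2 * i ≤ n, q ^ i * q ^ (n - 2 * i) := by
        refine Nat.mul_le_mul_left _ ((card_le_card
          (filter_not_squarefree_monicsOfDegree_subset F n)).trans (card_biUnion_le.trans
            (sum_le_sum fun i _ ↦ card_image_le.trans ?_)))
        rw [card_product, card_monicsOfDegree, card_monicsOfDegree]
    _ ≤ ∑ i ∈ Icc 1 n with 2 * i ≤ n, q ^ n := by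
        rw [mul_sum]
        refine sum_le_sum fun i hi ↦ ?_
        rw [← pow_add, ← pow_succ']
        simp only [mem_filter, mem_Icc] at hi
        exact Nat.pow_le_pow_right Fintype.card_pos (by lia)
    _ ≤ n * q ^ n := by
        rw [sum_const, smul_eq_mul]
        exact Nat.mul_le_mul_right _ ((card_filter_le _ _).trans (by simp))

theorem card_mul_abs_sum_le_of_eq_zero_of_squarefree {R : Type*} [CommRing R] [LinearOrder R]
    [IsStrictOrderedRing R] {α : F[X] → R} {n : ℕ} {A : R}
    (hα : ∀ f ∈ monicsOfDegree F n, Squarefree f → α f = 0)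
    (hA : ∀ f ∈ monicsOfDegree F n, |α f| ≤ A) :
    Fintype.card F * |∑ f ∈ monicsOfDegree F n, α f| ≤ A * n * Fintype.card F ^ n := by
  have hA₀ : 0 ≤ A := (abs_nonneg _).trans
    (hA (Polynomial.X ^ n) (mem_monicsOfDegree.2 ⟨monic_X_pow n, natDegree_X_pow n⟩))
  have hsum : |∑ f ∈ monicsOfDegree F n, α f| ≤
      #{f ∈ monicsOfDegree F n | ¬ Squarefree f} * A := by
    rw [← sum_filter_of_ne (p := fun f ↦ ¬ Squarefree f) fun f hf hne hs ↦ hne (hα f hf hs),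
      ← nsmul_eq_mul]
    exact (abs_sum_le_sum_abs _ _).trans
      (sum_le_card_nsmul _ _ _ fun f hf ↦ hA f (mem_filter.1 hf).1)
  calc (Fintype.card F : R) * |∑ f ∈ monicsOfDegree F n, α f|
      ≤ Fintype.card F * (#{f ∈ monicsOfDegree F n | ¬ Squarefree f} * A) := by gcongr
    _ = (Fintype.card F * #{f ∈ monicsOfDegree F n | ¬ Squarefree f} : ℕ) * A := by
        push_cast; ring
    _ ≤ (n * Fintype.card F ^ n : ℕ) * A := by
        gcongr ((?_ : ℕ) : R) * A
        exact card_mul_card_not_squarefree_le F n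
    _ = A * n * Fintype.card F ^ n := by push_cast; ring

end Squarefree

section Bounds

variable {F R : Type*} [Field F] [CommRing R] [LinearOrder R] [IsStrictOrderedRing R] {n : ℕ}

/-- `BoundedToDegree n A α` says that `|α| ≤ A` on the monic polynomials of degree at most `n`. The
constants obtained from the lemmas below do not depend on the field. -/
def BoundedToDegree (n : ℕ) (A : R) (α : F[X] → R) : Prop :=
  ∀ f : F[X], f.Monic → f.natDegree ≤ n → |α f| ≤ A

namespace BoundedToDegree

variable {A B : R} {α β : F[X] → R}

theorem nonneg (hα : BoundedToDegree n A α) : 0 ≤ A :=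
  (abs_nonneg _).trans (hα 1 monic_one (by simp))

theorem mul (hα : BoundedToDegree n A α) (hβ : BoundedToDegree n B β) :
    BoundedToDegree n (A * B) (α * β) := fun f hf hn ↦ by
  rw [Pi.mul_apply, abs_mul]
  exact mul_le_mul (hα f hf hn) (hβ f hf hn) (abs_nonneg _) hα.nonneg

theorem sub (hα : BoundedToDegree n A α) (hβ : BoundedToDegree n B β) :
    BoundedToDegree n (A + B) (α - β) := fun f hf hn ↦
  (abs_sub _ _).trans (add_le_add (hα f hf hn) (hβ f hf hn))

protected theorem dirichletConv (hα : BoundedToDegree n A α) (hβ : BoundedToDegree n B β) :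
    BoundedToDegree n (2 ^ n * (A * B)) (dirichletConv α β) := by
  intro f hf hn
  have hterm : ∀ p ∈ monicFactorizations f, |α p.1 * β p.2| ≤ A * B := by
    intro p hp
    obtain ⟨h₁, h₂, -⟩ := mem_monicFactorizations.1 hp
    have hadd := natDegree_add_of_mem_monicFactorizations hp
    rw [abs_mul]
    exact mul_le_mul (hα _ h₁ (by lia)) (hβ _ h₂ (by lia)) (abs_nonneg _) hα.nonneg
  have hcard : (#(monicFactorizations f) : R) ≤ 2 ^ n := mod_cast
    (card_monicFactorizations_le hf).trans (Nat.pow_le_pow_right two_pos hn)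
  calc |dirichletConv α β f| ≤ ∑ p ∈ monicFactorizations f, |α p.1 * β p.2| :=
        abs_sum_le_sum_abs _ _
    _ ≤ #(monicFactorizations f) * (A * B) := by
        rw [← nsmul_eq_mul]
        exact sum_le_card_nsmul _ _ _ hterm
    _ ≤ 2 ^ n * (A * B) := by
        gcongr
        exact mul_nonneg hα.nonneg hβ.nonneg

end BoundedToDegree

theorem boundedToDegree_degPow (n : ℕ) (u : R) :
    BoundedToDegree n (max 1 |u| ^ n) (degPow u : F[X] → R) := fun f _ hn ↦ by
  rw [degPow, abs_pow]
  exact (pow_le_pow_left₀ (abs_nonneg u) (le_max_right 1 |u|) _).trans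
    (pow_le_pow_right₀ (le_max_left 1 |u|) hn)

theorem abs_moebius_le_one (f : F[X]) : |moebius f| ≤ 1 := by
  by_cases h : Squarefree f
  · simp [h.moebius_eq]
  · simp [moebius_of_not_squarefree h]

theorem boundedToDegree_moebiusTwist (n : ℕ) (u : R) :
    BoundedToDegree n (max 1 |u| ^ n) (moebiusTwist u : F[X] → R) := fun f hf hn ↦ by
  have hμ : |(moebius f : R)| ≤ 1 := mod_cast abs_moebius_le_one f
  rw [moebiusTwist, abs_mul]
  exact (mul_le_of_le_one_left (abs_nonneg _) hμ).trans (boundedToDegree_degPow n u f hf hn)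

end Bounds

section WeightedVonMangoldt

variable {F R : Type*} [Field F] [CommRing R]

theorem weightedVonMangoldt_add (φ φ' : ℕ → R) (f : F[X]) :
    weightedVonMangoldt (φ + φ') f = weightedVonMangoldt φ f + weightedVonMangoldt φ' f := by
  simp [weightedVonMangoldt, dirichletConv, mul_add, sum_add_distrib]

theorem weightedVonMangoldt_smul (c : R) (φ : ℕ → R) (f : F[X]) :
    weightedVonMangoldt (c • φ) f = c * weightedVonMangoldt φ f := by
  simp [weightedVonMangoldt, dirichletConv, mul_left_comm, mul_sum]

theorem weightedVonMangoldt_congr {φ φ' : ℕ → R} {f : F[X]}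
    (h : ∀ m ≤ f.natDegree, φ m = φ' m) :
    weightedVonMangoldt φ f = weightedVonMangoldt φ' f :=
  sum_congr rfl fun p hp ↦ congrArg (moebiusTwist 1 p.1 * ·)
    (h _ ((Nat.le_add_left _ _).trans (natDegree_add_of_mem_monicFactorizations hp).le))

theorem weightedVonMangoldt_mul_eq_covarianceKernel_of_squarefree (u v : R) {f : F[X]}
    (hf : f.Monic) (hs : Squarefree f) :
    weightedVonMangoldt (u ^ ·) f * weightedVonMangoldt (v ^ ·) f = covarianceKernel u v f := by
  have hμ (w : R) := moebiusTwist_squarefreeMultiplicative (F := F) w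
  have hpow (w : R) := degPow_squarefreeMultiplicative (F := F) w
  have hleft (w : R) := (hμ 1).dirichletConv (hpow w)
  have h₁ := (hpow 1).dirichletConv (hμ u)
  have h₂ := (hμ v).dirichletConv (hpow (u * v))
  refine ((hleft u).mul (hleft v)).eq_of_eq_on_irreducible (h₁.dirichletConv h₂)
    (fun P hP hm ↦ ?_) hf hs
  rw [Pi.mul_apply, (hμ 1).dirichletConv_irreducible (hpow u) hP hm,
    (hμ 1).dirichletConv_irreducible (hpow v) hP hm, h₁.dirichletConv_irreducible h₂ hP hm,
    (hpow 1).dirichletConv_irreducible (hμ u) hP hm,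
    (hμ v).dirichletConv_irreducible (hpow (u * v)) hP hm]
  simp only [moebiusTwist_irreducible _ hP, degPow]
  ring

end WeightedVonMangoldt

section Covariance

variable (F : Type*) [Field F] [Fintype F]

/-- The deviation of the covariance of two generalised von Mangoldt functions over `M_n` from its
large-`q` limit, as a bilinear form in the weights. -/
noncomputable def covarianceError (n : ℕ) : (ℕ → ℝ) →ₗ[ℝ] (ℕ → ℝ) →ₗ[ℝ] ℝ :=
  LinearMap.mk₂ ℝ
    (fun φ ψ ↦ ((Fintype.card F : ℝ) ^ n)⁻¹ *
        ∑ f ∈ monicsOfDegree F n, weightedVonMangoldt φ f * weightedVonMangoldt ψ f -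
      ∑ d ∈ Icc 1 n, (φ d - φ (d - 1)) * (ψ d - ψ (d - 1)))
    (fun φ φ' ψ ↦ by
      simp only [weightedVonMangoldt_add, Pi.add_apply, add_mul, add_sub_add_comm, sum_add_distrib,
        mul_add])
    (fun c φ ψ ↦ by
      simp only [weightedVonMangoldt_smul, Pi.smul_apply, smul_eq_mul, mul_assoc, ← mul_sub,
        ← mul_sum, mul_left_comm _ c])
    (fun φ ψ ψ' ↦ by
      simp only [weightedVonMangoldt_add, Pi.add_apply, mul_add, add_sub_add_comm, sum_add_distrib])
    (fun c φ ψ ↦ by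
      simp only [weightedVonMangoldt_smul, Pi.smul_apply, smul_eq_mul, ← mul_sub, ← mul_sum,
        mul_left_comm _ c])

theorem covarianceError_apply (n : ℕ) (φ ψ : ℕ → ℝ) :
    covarianceError F n φ ψ = ((Fintype.card F : ℝ) ^ n)⁻¹ *
        ∑ f ∈ monicsOfDegree F n, weightedVonMangoldt φ f * weightedVonMangoldt ψ f -
      ∑ d ∈ Icc 1 n, (φ d - φ (d - 1)) * (ψ d - ψ (d - 1)) :=
  rfl

theorem covarianceError_congr {n : ℕ} {φ φ' ψ ψ' : ℕ → ℝ} (hφ : ∀ m ≤ n, φ m = φ' m)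
    (hψ : ∀ m ≤ n, ψ m = ψ' m) : covarianceError F n φ ψ = covarianceError F n φ' ψ' := by
  rw [covarianceError_apply, covarianceError_apply]
  congr 1
  · refine congrArg (_ * ·) (sum_congr rfl fun f hf ↦ ?_)
    have hdeg : f.natDegree = n := (mem_monicsOfDegree.1 hf).2
    rw [weightedVonMangoldt_congr fun m hm ↦ hφ m (hm.trans hdeg.le),
      weightedVonMangoldt_congr fun m hm ↦ hψ m (hm.trans hdeg.le)]
  · refine sum_congr rfl fun d hd ↦ ?_
    have hd' := (mem_Icc.1 hd).2
    rw [hφ d hd', hφ _ (by lia), hψ d hd', hψ _ (by lia)]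

theorem covarianceError_natPow (j k n : ℕ) :
    covarianceError F n (fun m ↦ (m : ℝ) ^ j) (fun m ↦ (m : ℝ) ^ k) =
      ((Fintype.card F : ℝ) ^ n)⁻¹ *
          (∑ᶠ f ∈ {f : F[X] | f.Monic ∧ f.natDegree = n}, (polyVMJ j f : ℝ) * (polyVMJ k f : ℝ)) -
        ∑ d ∈ Icc 1 n,
          ((d : ℝ) ^ j - ((d : ℝ) - 1) ^ j) * ((d : ℝ) ^ k - ((d : ℝ) - 1) ^ k) := by
  rw [covarianceError_apply]
  congr 1
  · have hset : {f : F[X] | f.Monic ∧ f.natDegree = n} = monicsOfDegree F n := by ext; simp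
    rw [hset, finsum_mem_coe_finset]
    refine congrArg (_ * ·) (sum_congr rfl fun f hf ↦ ?_)
    have hm : f.Monic := (mem_monicsOfDegree.1 hf).1
    rw [polyVMJ_eq_weightedVonMangoldt j hm, polyVMJ_eq_weightedVonMangoldt k hm]
  · refine sum_congr rfl fun d hd ↦ ?_
    rw [Nat.cast_pred (mem_Icc.1 hd).1]

theorem exists_boundedToDegree_mul_sub_covarianceKernel (n : ℕ) (u v : ℝ) :
    ∃ A : ℝ, ∀ (F : Type*) [Field F], BoundedToDegree (F := F) n A
      (weightedVonMangoldt (u ^ ·) * weightedVonMangoldt (v ^ ·) - covarianceKernel u v) :=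
  have hμ (F) [Field F] (w : ℝ) := boundedToDegree_moebiusTwist (F := F) n w
  have hpow (F) [Field F] (w : ℝ) := boundedToDegree_degPow (F := F) n w
  ⟨_, fun F _ ↦ (((hμ F 1).dirichletConv (hpow F u)).mul ((hμ F 1).dirichletConv (hpow F v))).sub
    (((hpow F 1).dirichletConv (hμ F u)).dirichletConv ((hμ F v).dirichletConv (hpow F (u * v))))⟩

theorem exists_abs_covarianceError_pow_le {n : ℕ} (hn : n ≠ 0) (u v : ℝ) :
    ∃ K : ℝ, ∀ (F : Type*) [Field F] [Fintype F],
      |covarianceError F n (u ^ ·) (v ^ ·)| ≤ K / Fintype.card F := by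
  obtain ⟨A, hA⟩ := exists_boundedToDegree_mul_sub_covarianceKernel n u v
  refine ⟨A * n, fun F _ _ ↦ ?_⟩
  have hq : (0 : ℝ) < Fintype.card F := mod_cast Fintype.card_pos
  have hsum := card_mul_abs_sum_le_of_eq_zero_of_squarefree
    (fun f hf hs ↦ sub_eq_zero.2 (weightedVonMangoldt_mul_eq_covarianceKernel_of_squarefree u v
      (mem_monicsOfDegree.1 hf).1 hs))
    fun f hf ↦ hA F f (mem_monicsOfDegree.1 hf).1 (mem_monicsOfDegree.1 hf).2.le
  have herror : covarianceError F n (u ^ ·) (v ^ ·) = ((Fintype.card F : ℝ) ^ n)⁻¹ *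
      ∑ f ∈ monicsOfDegree F n, (weightedVonMangoldt (u ^ ·) f * weightedVonMangoldt (v ^ ·) f -
        covarianceKernel u v f) := by
    rw [covarianceError_apply, sum_sub_distrib, sum_covarianceKernel F u v hn, mul_sub,
      inv_mul_cancel_left₀ (pow_pos hq n).ne']
  rw [le_div_iff₀' hq, herror, abs_mul, abs_of_pos (inv_pos.2 (pow_pos hq n)), mul_left_comm,
    inv_mul_le_iff₀' (pow_pos hq n)]
  exact hsum

theorem exists_eq_sum_mul_pow {K : Type*} [Field K] {n : ℕ} {x : Fin n → K}
    (hx : Function.Injective x) (φ : ℕ → K) :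
    ∃ c : Fin n → K, ∀ m < n, φ m = ∑ i, c i * x i ^ m := by
  have hdet : IsUnit (Matrix.vandermonde x).det :=
    (Matrix.det_vandermonde_ne_zero_iff.2 hx).isUnit
  obtain ⟨c, hc⟩ := Matrix.vecMul_surjective_iff_isUnit.2
    ((Matrix.isUnit_iff_isUnit_det _).2 hdet) fun m : Fin n ↦ φ m
  exact ⟨c, fun m hm ↦ (congrFun hc ⟨m, hm⟩).symm⟩

theorem exists_abs_covarianceError_le {n : ℕ} (hn : n ≠ 0) (φ ψ : ℕ → ℝ) :
    ∃ K : ℝ, ∀ (F : Type*) [Field F] [Fintype F],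
      |covarianceError F n φ ψ| ≤ K / Fintype.card F := by
  have hinj : Function.Injective fun i : Fin (n + 1) ↦ (i : ℝ) :=
    Nat.cast_injective.comp Fin.val_injective
  obtain ⟨c, hc⟩ := exists_eq_sum_mul_pow hinj φ
  obtain ⟨d, hd⟩ := exists_eq_sum_mul_pow hinj ψ
  choose K hK using fun i j : Fin (n + 1) ↦ exists_abs_covarianceError_pow_le hn (i : ℝ) (j : ℝ)
  refine ⟨∑ i, ∑ j, |c i * d j| * K i j, fun F _ _ ↦ ?_⟩
  have hexpand : covarianceError F n φ ψ =
      ∑ i, ∑ j, c i * d j * covarianceError F n ((i : ℝ) ^ ·) ((j : ℝ) ^ ·) :=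
    calc covarianceError F n φ ψ
        = covarianceError F n (∑ i, c i • ((i : ℝ) ^ ·)) (∑ j, d j • ((j : ℝ) ^ ·)) :=
          covarianceError_congr F (fun m hm ↦ by simpa using hc m (Nat.lt_succ_of_le hm))
            fun m hm ↦ by simpa using hd m (Nat.lt_succ_of_le hm)
      _ = ∑ i, ∑ j, c i * d j * covarianceError F n ((i : ℝ) ^ ·) ((j : ℝ) ^ ·) := by
          rw [LinearMap.map_sum₂]
          simp only [map_sum, map_smul, LinearMap.smul_apply, smul_eq_mul, mul_assoc,
            mul_left_comm (d _)]
  rw [hexpand, sum_div]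
  refine (abs_sum_le_sum_abs _ _).trans (sum_le_sum fun i _ ↦ ?_)
  rw [sum_div]
  refine (abs_sum_le_sum_abs _ _).trans (sum_le_sum fun j _ ↦ ?_)
  rw [abs_mul, mul_div_assoc]
  exact mul_le_mul_of_nonneg_left (hK i j F) (abs_nonneg _)

end Covariance

end

/-- Equation (1.12) of Rodgers, "The covariance of almost-primes in F_q[T]":
`lim_{q→∞} q^{-n} Σ_{f ∈ M_n} Λ_j(f) Λ_k(f) = Σ_{d=1}^{n} (d^j−(d−1)^j)(d^k−(d−1)^k)`,
the limit being over finite fields `F` of cardinality `q → ∞`. -/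
theorem covariance_of_vonMangoldt (j k n : ℕ) (hj : 1 ≤ j) (hk : 1 ≤ k) (hn : 1 ≤ n) :
    ∀ ε : ℝ, 0 < ε → ∃ Q : ℕ, ∀ (F : Type) [Field F] [Fintype F],
      Q ≤ Fintype.card F →
      |((Fintype.card F : ℝ) ^ n)⁻¹ *
          (∑ᶠ f ∈ {f : F[X] | f.Monic ∧ f.natDegree = n},
            ((polyVMJ j f : ℝ) * (polyVMJ k f : ℝ)))
        - ∑ d ∈ Finset.Icc 1 n,
            ((d : ℝ) ^ j - ((d : ℝ) - 1) ^ j) * ((d : ℝ) ^ k - ((d : ℝ) - 1) ^ k)| < ε := by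
  intro ε hε
  obtain ⟨K, hK⟩ := exists_abs_covarianceError_le (Nat.one_le_iff_ne_zero.1 hn)
    (fun m ↦ (m : ℝ) ^ j) fun m ↦ (m : ℝ) ^ k
  obtain ⟨Q, hQ⟩ := exists_nat_gt (K / ε)
  refine ⟨Q, fun F _ _ hF ↦ ?_⟩
  have hq : (0 : ℝ) < Fintype.card F := mod_cast Fintype.card_pos
  have hKq : K / ε < Fintype.card F := hQ.trans_le (mod_cast hF)
  rw [← covarianceError_natPow]
  exact (hK F).trans_lt ((div_lt_comm₀ hε hq).1 hKq)
end

section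
/- For all integers N ≥ 1, j ≥ 1, k ≥ 1 and n ≥ 1: ∫_{U(N)} H_j^{(n)}(g) · conj(H_k^{(n)}(g)) dg = Σ_{d=1}^{min(n,N)} (d^j − (d−1)^j)(d^k − (d−1)^k), where the integral is with respect to Haar probability measure on U(N). -/
open Matrix MeasureTheory

noncomputable instance (N : ℕ) : MeasurableSpace (Matrix.unitaryGroup (Fin N) ℂ) := borel _
instance (N : ℕ) : BorelSpace (Matrix.unitaryGroup (Fin N) ℂ) := ⟨rfl⟩

/- The quantities `H_j^{(n)}(g)`: `H_1^{(n)}(g) = −Tr(g^n)` and, for `j ≥ 2`,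
`H_j^{(n)} = Σ_{ℓ+λ=n, ℓ,λ≥1} H_1^{(λ)} H_{j−1}^{(ℓ)} + n·H_{j−1}^{(n)}`
(here `H_1^{(λ)} = −Tr(g^λ)` is inlined in the recursion). -/
noncomputable def matH {N : ℕ} : ℕ → ℕ → Matrix (Fin N) (Fin N) ℂ → ℂ
  | 0, _, _ => 0
  | 1, n, g => -((g ^ n).trace)
  | (j + 2), n, g =>
      (∑ ℓ ∈ Finset.Ico 1 n, (-((g ^ (n - ℓ)).trace)) * matH (j + 1) ℓ g)
        + (n : ℂ) * matH (j + 1) n g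

/-!
Let `E = det (1 - X g) = ∑ (-1)^i e_i X^i`, `1 / E = ∑ h_i X^i` and `θ = X d/dX`. Since
`θ (1 / E) = (∑ tr (g^n) X^n) / E`, the recursion identifies `H_j^{(n)}` with the coefficient of
`X^n` in `(θ^j E) / E`, and summation by parts turns this into `∑_d (d^j - (d-1)^j) s_d`, where
`s_d = ∑_{d ≤ i ≤ n} (-1)^i e_i h_{n-i}` vanishes for `d > N`. It remains to see that the `s_d` with
`1 ≤ d ≤ min (n, N)` are orthonormal.

They are eigenfunctions of the Laplacian of the unitary group for the distinct eigenvalues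
`n (N + n + 1 - 2 d)`, hence orthogonal. As `tr (g^n) = -∑_d s_d`, it is then enough that the inner
product of `s_d` and `tr (g^n)` is `-1`. The eigenvalue equation turns this inner product into one
of gradients, and the gradients of `e_i` and `h_i` satisfy recursions in the degree that relate it
to the inner products for `d - 1` and for `n - 1`.
-/

open PowerSeries (X C coeff)
open Finset.HasAntidiagonal (antidiagonal mem_antidiagonal)
open scoped PowerSeries

section EulerOperator

variable {R : Type*} [CommRing R]

/-- The Euler operator `X d/dX` on power series, as a derivation. -/
noncomputable def euler (R : Type*) [CommRing R] : Derivation R R⟦X⟧ R⟦X⟧ :=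
  (X : R⟦X⟧) • PowerSeries.derivative R

theorem coeff_euler (f : R⟦X⟧) (n : ℕ) : coeff n (euler R f) = n * coeff n f := by
  cases n with
  | zero => simp [euler]
  | succ n => simp [euler, PowerSeries.coeff_succ_X_mul, PowerSeries.coeff_derivative, mul_comm]

theorem coeff_iterate_euler (f : R⟦X⟧) (j n : ℕ) :
    coeff n ((euler R)^[j] f) = (n : R) ^ j * coeff n f := by
  induction j with
  | zero => simp
  | succ j ih => rw [Function.iterate_succ_apply', coeff_euler, ih, pow_succ', mul_assoc]

end EulerOperator

section Det

variable {ι R A : Type*} [Fintype ι] [DecidableEq ι] [CommRing R] [CommRing A] [Algebra R A]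

theorem derivation_prod {κ : Type*} [DecidableEq κ] (D : Derivation R A A) (s : Finset κ)
    (f : κ → A) :
    D (∏ i ∈ s, f i) = ∑ i ∈ s, D (f i) * ∏ j ∈ s.erase i, f j := by
  induction s using Finset.induction_on with
  | empty => simp
  | insert a s ha ih =>
    have herase : ∀ i ∈ s, ∏ j ∈ (insert a s).erase i, f j = f a * ∏ j ∈ s.erase i, f j := by
      intro i hi
      rw [Finset.erase_insert_of_ne (ne_of_mem_of_not_mem hi ha).symm,
        Finset.prod_insert fun h => ha (Finset.mem_of_mem_erase h)]
    rw [Finset.prod_insert ha, D.leibniz, ih, Finset.sum_insert ha, Finset.erase_insert ha,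
      smul_eq_mul, smul_eq_mul, Finset.mul_sum, add_comm, mul_comm (∏ i ∈ s, f i)]
    congr 1
    refine Finset.sum_congr rfl fun i hi => ?_
    rw [herase i hi, mul_left_comm]

theorem adjugate_mul_apply_self (M N : Matrix ι ι A) (j : ι) :
    (M.adjugate * N) j j = (M.updateCol j fun i => N i j).det := by
  rw [← cramer_apply, cramer_eq_adjugate_mulVec]
  rfl

theorem derivation_det (D : Derivation R A A) (M : Matrix ι ι A) :
    D M.det = (M.adjugate * M.map D).trace := by
  have hprod : ∀ (σ : Equiv.Perm ι) (j : ι), ∏ i, M.updateCol j (fun i => D (M i j)) (σ i) i =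
      D (M (σ j) j) * ∏ i ∈ Finset.univ.erase j, M (σ i) i := by
    intro σ j
    rw [← Finset.mul_prod_erase _ _ (Finset.mem_univ j), updateCol_self]
    refine congrArg _ (Finset.prod_congr rfl fun i hi => ?_)
    rw [updateCol_ne (Finset.ne_of_mem_erase hi)]
  simp only [trace, diag_apply, adjugate_mul_apply_self, map_apply, det_apply, hprod, map_sum]
  rw [Finset.sum_comm]
  refine Finset.sum_congr rfl fun σ _ => ?_
  rw [Units.smul_def, map_zsmul, derivation_prod, Finset.smul_sum]
  rfl

end Det

section MatrixCoeff

variable {ι R : Type*} [CommRing R]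

theorem map_coeff_smul (f : R⟦X⟧) (M : Matrix ι ι R⟦X⟧) (n : ℕ) :
    (f • M).map (coeff n) = ∑ p ∈ antidiagonal n, coeff p.1 f • M.map (coeff p.2) := by
  ext i j
  simp [PowerSeries.coeff_mul, Matrix.sum_apply]

theorem map_coeff_map_euler (M : Matrix ι ι R⟦X⟧) (n : ℕ) :
    (M.map (euler R)).map (coeff n) = (n : R) • M.map (coeff n) := by
  ext i j
  simp [coeff_euler]

theorem map_derivation_smul {S B : Type*} [CommRing S] [CommRing B] [Algebra S B]
    (D : Derivation S B B) (f : B) (M : Matrix ι ι B) :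
    (f • M).map D = D f • M + f • M.map D := by
  ext i j
  simp [mul_comm, add_comm]

variable [Fintype ι]

theorem trace_map_coeff (M : Matrix ι ι R⟦X⟧) (n : ℕ) :
    (M.map (coeff n)).trace = coeff n M.trace := by
  simp [trace]

theorem map_coeff_mul (M N : Matrix ι ι R⟦X⟧) (n : ℕ) :
    (M * N).map (coeff n) =
      ∑ p ∈ antidiagonal n, M.map (coeff p.1) * N.map (coeff p.2) := by
  ext i j
  simp only [map_apply, mul_apply, map_sum, PowerSeries.coeff_mul, Matrix.sum_apply]
  exact Finset.sum_comm

theorem map_derivation_mul {S B : Type*} [CommRing S] [CommRing B] [Algebra S B]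
    (D : Derivation S B B) (M N : Matrix ι ι B) :
    (M * N).map D = M.map D * N + M * N.map D := by
  ext i j
  simp [mul_apply, Finset.sum_add_distrib, mul_comm, add_comm]

end MatrixCoeff

section Resolvent

variable {ι R : Type*} [Fintype ι] [DecidableEq ι] [CommRing R]

/-- The matrix `X A` over the power series ring. -/
noncomputable def linearMatrix (A : Matrix ι ι R) : Matrix ι ι R⟦X⟧ :=
  (X : R⟦X⟧) • A.map (C (R := R))

/-- The matrix of power series `∑_{k ≥ 1} A ^ k X ^ k`, the generating function of the powers of
`A`. -/
noncomputable def powerMatrix (A : Matrix ι ι R) : Matrix ι ι R⟦X⟧ :=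
  Matrix.of fun i j => X * PowerSeries.mk fun k => (A ^ (k + 1)) i j

/-- The generating function `∑_{k ≥ 1} tr (A ^ k) X ^ k` of the power sums of the eigenvalues. -/
noncomputable def powerSumSeries (A : Matrix ι ι R) : R⟦X⟧ :=
  (powerMatrix A).trace

/-- The reverse characteristic polynomial `det (1 - X A)`, as a power series: the generating
function of the signed elementary symmetric functions of the eigenvalues. -/
noncomputable def elemSeries (A : Matrix ι ι R) : R⟦X⟧ :=
  (A.charpolyRev : R⟦X⟧)

/-- The inverse of `det (1 - X A)`: the generating function of the complete homogeneous symmetric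
functions of the eigenvalues. -/
noncomputable def completeSeries (A : Matrix ι ι R) : R⟦X⟧ :=
  (elemSeries A).invOfUnit 1

variable (A : Matrix ι ι R)

theorem map_coeff_zero_powerMatrix : (powerMatrix A).map (coeff 0) = 0 := by
  ext i j
  simp [powerMatrix]

theorem map_coeff_succ_powerMatrix (n : ℕ) :
    (powerMatrix A).map (coeff (n + 1)) = A ^ (n + 1) := by
  ext i j
  simp [powerMatrix, PowerSeries.coeff_succ_X_mul]

omit [DecidableEq ι] in
theorem map_coeff_succ_linearMatrix_mul (M : Matrix ι ι R⟦X⟧) (n : ℕ) :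
    (linearMatrix A * M).map (coeff (n + 1)) = A * M.map (coeff n) := by
  ext i j
  simp [linearMatrix, mul_apply, PowerSeries.coeff_succ_X_mul]

theorem map_coeff_one_add_powerMatrix (n : ℕ) : (1 + powerMatrix A).map (coeff n) = A ^ n := by
  have hone : (1 : Matrix ι ι R⟦X⟧).map (coeff n) = if n = 0 then 1 else 0 := by
    ext i j
    rw [map_apply, one_apply]
    split_ifs <;> simp_all [PowerSeries.coeff_one, one_apply]
  rw [Matrix.map_add _ (map_add _), hone]
  cases n with
  | zero => rw [map_coeff_zero_powerMatrix, if_pos rfl, add_zero, pow_zero]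
  | succ n => simp [map_coeff_succ_powerMatrix]

theorem powerMatrix_eq :
    powerMatrix A = linearMatrix A * (1 + powerMatrix A) := by
  ext i j n
  rw [← map_apply (f := coeff n), ← map_apply (f := coeff n)]
  cases n with
  | zero => simp [powerMatrix, linearMatrix, mul_apply]
  | succ n =>
    rw [map_coeff_succ_linearMatrix_mul, map_coeff_one_add_powerMatrix,
      map_coeff_succ_powerMatrix, pow_succ']

theorem one_sub_mul_one_add_powerMatrix :
    (1 - linearMatrix A) * (1 + powerMatrix A) = 1 := by
  rw [sub_mul, one_mul, ← powerMatrix_eq, add_sub_cancel_right]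

omit [Fintype ι] [DecidableEq ι] in
theorem map_euler_linearMatrix :
    (linearMatrix A).map (euler R) = linearMatrix A := by
  ext i j n
  rw [map_apply, coeff_euler, linearMatrix, Matrix.smul_apply, map_apply, smul_eq_mul]
  rcases n with _ | _ | n <;> simp [PowerSeries.coeff_X]

theorem map_euler_powerMatrix :
    (powerMatrix A).map (euler R) = powerMatrix A + powerMatrix A * powerMatrix A := by
  have hinv : (1 + powerMatrix A) * (1 - linearMatrix A) = 1 :=
    mul_eq_one_comm.mp (one_sub_mul_one_add_powerMatrix A)
  have hone : (1 + powerMatrix A).map (euler R) = (powerMatrix A).map (euler R) := by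
    ext1 i j
    by_cases h : i = j <;> simp [one_apply, h]
  have hderiv : (powerMatrix A).map (euler R) =
      powerMatrix A + linearMatrix A * (powerMatrix A).map (euler R) := by
    conv_lhs => rw [powerMatrix_eq]
    rw [map_derivation_mul, map_euler_linearMatrix, ← powerMatrix_eq, hone]
  calc (powerMatrix A).map (euler R)
      = (1 + powerMatrix A) * ((1 - linearMatrix A) * (powerMatrix A).map (euler R)) := by
        rw [← mul_assoc, hinv, one_mul]
    _ = (1 + powerMatrix A) * powerMatrix A := by
        rw [sub_mul, one_mul, sub_eq_of_eq_add hderiv]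
    _ = powerMatrix A + powerMatrix A * powerMatrix A := by rw [add_mul, one_mul]

theorem trace_powerMatrix_mul_self :
    (powerMatrix A * powerMatrix A).trace = euler R (powerSumSeries A) - powerSumSeries A := by
  have h := congrArg trace (map_euler_powerMatrix A)
  rw [trace_add] at h
  rw [powerSumSeries, AddMonoidHom.map_trace, h]
  simp

theorem coeff_zero_elemSeries : coeff 0 (elemSeries A) = 1 := by
  rw [elemSeries, Polynomial.coeff_coe, Polynomial.coeff_zero_eq_eval_zero, eval_charpolyRev]

theorem coeff_elemSeries_of_card_lt {n : ℕ} (hn : Fintype.card ι < n) :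
    coeff n (elemSeries A) = 0 := by
  nontriviality R
  rw [elemSeries, Polynomial.coeff_coe, ← reverse_charpoly]
  refine Polynomial.coeff_eq_zero_of_natDegree_lt ?_
  exact (Polynomial.reverse_natDegree_le _).trans_lt (charpoly_natDegree_eq_dim A ▸ hn)

theorem coeff_zero_completeSeries : coeff 0 (completeSeries A) = 1 := by
  rw [PowerSeries.coeff_zero_eq_constantCoeff_apply, completeSeries,
    PowerSeries.constantCoeff_invOfUnit, inv_one, Units.val_one]

theorem elemSeries_eq_det : elemSeries A = (1 - linearMatrix A).det := by
  rw [elemSeries, charpolyRev, ← Polynomial.coeToPowerSeries.ringHom_apply, RingHom.map_det]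
  congr 1
  ext1 i j
  by_cases h : i = j <;> simp [linearMatrix, h, mul_comm (X : R⟦X⟧)]

theorem elemSeries_mul_completeSeries : elemSeries A * completeSeries A = 1 :=
  PowerSeries.mul_invOfUnit _ _ <| by
    rw [← PowerSeries.coeff_zero_eq_constantCoeff_apply, coeff_zero_elemSeries, Units.val_one]

theorem adjugate_one_sub_linearMatrix :
    (1 - linearMatrix A).adjugate = elemSeries A • (1 + powerMatrix A) := by
  calc (1 - linearMatrix A).adjugate
      = (1 - linearMatrix A).adjugate * ((1 - linearMatrix A) * (1 + powerMatrix A)) := by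
        rw [one_sub_mul_one_add_powerMatrix, mul_one]
    _ = elemSeries A • (1 + powerMatrix A) := by
        rw [← mul_assoc, adjugate_mul, smul_mul, one_mul, elemSeries_eq_det]

theorem euler_elemSeries : euler R (elemSeries A) = -(powerSumSeries A * elemSeries A) := by
  have hmap : (1 - linearMatrix A).map (euler R) = -linearMatrix A := by
    rw [Matrix.map_sub _ (map_sub _), map_euler_linearMatrix]
    ext1 i j
    by_cases h : i = j <;> simp [one_apply, h]
  rw [elemSeries_eq_det, derivation_det, adjugate_one_sub_linearMatrix, hmap, smul_mul, mul_neg,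
    trace_smul, trace_neg, trace_mul_comm, ← powerMatrix_eq, smul_eq_mul, mul_neg, mul_comm,
    powerSumSeries, elemSeries_eq_det]

theorem euler_completeSeries :
    euler R (completeSeries A) = powerSumSeries A * completeSeries A := by
  have hinv := elemSeries_mul_completeSeries A
  have hderiv : euler R (elemSeries A * completeSeries A) = 0 := by
    rw [hinv, Derivation.map_one_eq_zero]
  rw [Derivation.leibniz, smul_eq_mul, smul_eq_mul, euler_elemSeries] at hderiv
  linear_combination completeSeries A * hderiv +
    (powerSumSeries A * completeSeries A - euler R (completeSeries A)) * hinv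

/-- The coefficient of `X ^ n` in `σ U ∑_{k ≥ 1} A ^ k X ^ k`. If `U` is a power series attached to
`A` with `X dU/dX = σ P U`, where `P` is the series of power sums, this is the gradient of the
`n`-th coefficient of `U` as a function on the unitary group; see `hasGrad_coeff`. -/
noncomputable def seriesGrad (σ : R) (U : R⟦X⟧) (A : Matrix ι ι R) (n : ℕ) : Matrix ι ι R :=
  ((σ • U) • powerMatrix A).map (coeff n)

theorem seriesGrad_zero (σ : R) (U : R⟦X⟧) : seriesGrad σ U A 0 = 0 := by
  rw [seriesGrad, map_coeff_smul]
  simp [map_coeff_zero_powerMatrix, -PowerSeries.coeff_zero_eq_constantCoeff]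

theorem seriesGrad_succ (σ : R) (U : R⟦X⟧) (n : ℕ) :
    seriesGrad σ U A (n + 1) = A * (seriesGrad σ U A n + (σ * coeff n U) • 1) := by
  have hone : ((σ • U) • (1 : Matrix ι ι R⟦X⟧)).map (coeff n) = (σ * coeff n U) • 1 := by
    ext i j
    by_cases h : i = j <;> simp [one_apply, h]
  rw [← hone, seriesGrad, powerMatrix_eq, ← mul_smul_comm, map_coeff_succ_linearMatrix_mul,
    smul_add, add_comm, Matrix.map_add _ (map_add _), seriesGrad]

theorem commute_seriesGrad (σ : R) (U : R⟦X⟧) (n : ℕ) : Commute A (seriesGrad σ U A n) := by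
  induction n with
  | zero => rw [seriesGrad_zero]; exact Commute.zero_right A
  | succ n ih =>
    rw [seriesGrad_succ]
    exact (Commute.refl A).mul_right (ih.add_right ((Commute.one_right A).smul_right _))

theorem trace_seriesGrad {σ : R} {U : R⟦X⟧} (hU : euler R U = σ • (powerSumSeries A * U)) (n : ℕ) :
    (seriesGrad σ U A n).trace = n * coeff n U := by
  rw [seriesGrad, trace_map_coeff, trace_smul, ← powerSumSeries, ← coeff_euler, hU, smul_eq_mul,
    smul_mul_assoc, mul_comm U]

theorem natCast_smul_seriesGrad {σ : R} {U : R⟦X⟧}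
    (hU : euler R U = σ • (powerSumSeries A * U)) (n : ℕ) :
    (n : R) • seriesGrad σ U A n = σ • ∑ p ∈ antidiagonal n,
      (coeff p.1 (powerSumSeries A) • seriesGrad σ U A p.2 +
        coeff p.2 U • (p.1 : R) • (powerMatrix A).map (coeff p.1)) := by
  have hmap : ((σ • U) • powerMatrix A).map (euler R) = σ • (powerSumSeries A •
      (σ • U) • powerMatrix A + U • (powerMatrix A).map (euler R)) := by
    rw [map_derivation_smul, Derivation.map_smul, hU]
    ext1 i j
    simp only [Matrix.add_apply, Matrix.smul_apply, smul_eq_mul, PowerSeries.smul_eq_C_mul]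
    ring
  have hsmul : ∀ M : Matrix ι ι R⟦X⟧, (σ • M).map (coeff n) = σ • M.map (coeff n) := by
    intro M
    ext i j
    simp
  have hcoeff := congrArg (fun M => M.map (coeff n)) hmap
  rw [map_coeff_map_euler, hsmul, Matrix.map_add _ (map_add _), map_coeff_smul _ (_ • _),
    map_coeff_smul _ (Matrix.map _ _)] at hcoeff
  simp only [map_coeff_map_euler] at hcoeff
  rw [seriesGrad, hcoeff, Finset.sum_add_distrib]
  congr 2
  exact (Finset.Nat.sum_antidiagonal_swap (n := n) (f := fun p =>
    coeff p.1 U • (p.2 : R) • (powerMatrix A).map (coeff p.2))).symm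

theorem sum_trace_seriesGrad_mul (σ : R) (U : R⟦X⟧) (n : ℕ) :
    ∑ p ∈ antidiagonal n, (seriesGrad σ U A p.1 * (powerMatrix A).map (coeff p.2)).trace =
      σ * coeff n (U * (powerMatrix A * powerMatrix A).trace) := by
  simp only [seriesGrad]
  rw [← trace_sum, ← map_coeff_mul, trace_map_coeff, smul_mul, trace_smul, smul_eq_mul,
    smul_mul_assoc, PowerSeries.coeff_smul, smul_eq_mul]

theorem card_mul_euler_add_smul {σ : R} (hσ : σ * σ = 1) {U : R⟦X⟧}
    (hU : euler R U = σ • (powerSumSeries A * U)) :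
    Fintype.card ι • euler R U + σ • (euler R (euler R U) - euler R U) =
      σ • (U * (powerSumSeries A * (Fintype.card ι + powerSumSeries A))) +
        U * (powerMatrix A * powerMatrix A).trace := by
  have hσ' : C σ * C σ = (1 : R⟦X⟧) := by rw [← map_mul, hσ, map_one]
  have hU' : euler R (euler R U) =
      σ • (powerSumSeries A * euler R U + U * euler R (powerSumSeries A)) := by
    conv_lhs => rw [hU]
    rw [Derivation.map_smul, Derivation.leibniz, smul_eq_mul, smul_eq_mul]
  rw [trace_powerMatrix_mul_self, hU', hU]
  simp only [PowerSeries.smul_eq_C_mul, nsmul_eq_mul]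
  linear_combination (U * (euler R (powerSumSeries A) + C σ * powerSumSeries A ^ 2
    - powerSumSeries A)) * hσ'

end Resolvent

section Hook

variable {ι R : Type*} [Fintype ι] [DecidableEq ι] [CommRing R] (A : Matrix ι ι R)

/-- The signed elementary symmetric function `(-1) ^ n e_n` of the eigenvalues of `A`. -/
noncomputable def elemSymm (n : ℕ) : R :=
  coeff n (elemSeries A)

/-- The complete homogeneous symmetric function `h_n` of the eigenvalues of `A`. -/
noncomputable def completeSymm (n : ℕ) : R :=
  coeff n (completeSeries A)

/-- The gradient of `elemSymm` on the unitary group. -/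
noncomputable def elemGrad : ℕ → Matrix ι ι R :=
  seriesGrad (-1) (elemSeries A) A

/-- The gradient of `completeSymm` on the unitary group. -/
noncomputable def completeGrad : ℕ → Matrix ι ι R :=
  seriesGrad 1 (completeSeries A) A

/-- The truncated convolution `∑_{d ≤ i ≤ n} (-1) ^ i e_i h_{n - i}`, which up to sign is the Schur
function of the hook `(n - d + 1, 1 ^ (d - 1))` at the eigenvalues of `A`. -/
noncomputable def hook (d n : ℕ) : R :=
  ∑ i ∈ Finset.Ico d (n + 1), elemSymm A i * completeSymm A (n - i)

/-- The gradient of `hook` on the unitary group. -/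
noncomputable def hookGrad (d n : ℕ) : Matrix ι ι R :=
  ∑ i ∈ Finset.Ico d (n + 1),
    (elemSymm A i • completeGrad A (n - i) + completeSymm A (n - i) • elemGrad A i)

theorem elemGrad_succ (n : ℕ) :
    elemGrad A (n + 1) = A * (elemGrad A n - elemSymm A n • 1) := by
  rw [elemGrad, seriesGrad_succ, neg_one_mul, neg_smul, ← sub_eq_add_neg, elemSymm]

theorem completeGrad_succ (n : ℕ) :
    completeGrad A (n + 1) = A * (completeGrad A n + completeSymm A n • 1) := by
  rw [completeGrad, seriesGrad_succ, one_mul, completeSymm]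

theorem trace_elemGrad (n : ℕ) : (elemGrad A n).trace = n * elemSymm A n :=
  trace_seriesGrad A (by rw [euler_elemSeries, neg_one_smul]) n

theorem trace_completeGrad (n : ℕ) : (completeGrad A n).trace = n * completeSymm A n :=
  trace_seriesGrad A (by rw [euler_completeSeries, one_smul]) n

theorem hook_of_lt {d n : ℕ} (h : n < d) : hook A d n = 0 := by
  rw [hook, Finset.Ico_eq_empty_of_le h, Finset.sum_empty]

theorem hook_of_card_lt {d : ℕ} (n : ℕ) (h : Fintype.card ι < d) : hook A d n = 0 := by
  refine Finset.sum_eq_zero fun i hi => ?_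
  rw [elemSymm, coeff_elemSeries_of_card_lt A (h.trans_le (Finset.mem_Ico.mp hi).1), zero_mul]

theorem hook_eq_add_hook_succ (d m : ℕ) :
    hook A d (d + m) = elemSymm A d * completeSymm A m + hook A (d + 1) (d + m) := by
  rw [hook, Finset.sum_eq_sum_Ico_succ_bot (by lia), Nat.add_sub_cancel_left, hook]

theorem hookGrad_of_lt {d n : ℕ} (h : n < d) : hookGrad A d n = 0 := by
  rw [hookGrad, Finset.Ico_eq_empty_of_le h, Finset.sum_empty]

theorem hookGrad_eq_add_hookGrad_succ (d m : ℕ) :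
    hookGrad A d (d + m) = elemSymm A d • completeGrad A m + completeSymm A m • elemGrad A d +
      hookGrad A (d + 1) (d + m) := by
  rw [hookGrad, Finset.sum_eq_sum_Ico_succ_bot (by lia), Nat.add_sub_cancel_left, hookGrad]

theorem hook_zero (n : ℕ) : hook A 0 n = if n = 0 then 1 else 0 := by
  rw [← PowerSeries.coeff_one, ← elemSeries_mul_completeSeries A, PowerSeries.coeff_mul,
    Finset.Nat.sum_antidiagonal_eq_sum_range_succ_mk, Finset.range_eq_Ico]
  rfl

theorem trace_elemGrad_mul_completeGrad (d m : ℕ) :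
    (elemGrad A d * completeGrad A m).trace =
      m * (elemSymm A d * completeSymm A m) + (d + m) * hook A (d + 1) (d + m) := by
  induction m generalizing d with
  | zero =>
    rw [completeGrad, seriesGrad_zero, mul_zero, trace_zero, hook_of_lt A (by lia)]
    simp
  | succ m ih =>
    have hcomm : elemGrad A d * A = A * elemGrad A d := (commute_seriesGrad A _ _ d).eq.symm
    have hdiff : elemGrad A d * completeGrad A (m + 1) - elemGrad A (d + 1) * completeGrad A m =
        completeSymm A m • (elemGrad A (d + 1) + elemSymm A d • A) +
          elemSymm A d • (completeGrad A (m + 1) - completeSymm A m • A) := by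
      rw [completeGrad_succ, elemGrad_succ, ← mul_assoc, hcomm]
      simp only [mul_add, mul_sub, sub_mul, mul_smul_comm, smul_mul_assoc, mul_one,
        smul_add, smul_sub, smul_smul, mul_assoc]
      rw [mul_comm (completeSymm A m)]
      abel
    have htrace := congrArg trace hdiff
    simp only [trace_sub, trace_add, trace_smul, trace_elemGrad, trace_completeGrad,
      smul_eq_mul, ih] at htrace
    have hstep := hook_eq_add_hook_succ A (d + 1) m
    rw [add_right_comm d 1 m] at hstep htrace
    push_cast [← add_assoc] at hstep htrace ⊢
    linear_combination htrace - (d + 1 + m) * hstep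

theorem hookGrad_succ_succ (d m : ℕ) :
    hookGrad A (d + 1) (d + m + 1) =
      A * hookGrad A (d + 1) (d + m) + completeSymm A m • elemGrad A (d + 1) := by
  induction m generalizing d with
  | zero =>
    have hlast := hookGrad_eq_add_hookGrad_succ A (d + 1) 0
    rw [add_zero, hookGrad_of_lt A (by lia : d + 1 < d + 1 + 1), completeGrad, seriesGrad_zero,
      smul_zero, zero_add, add_zero] at hlast
    rw [add_zero, hlast, hookGrad_of_lt A (Nat.lt_succ_self d), mul_zero, zero_add]
  | succ m ih =>
    have hshift :
        completeSymm A m • elemGrad A (d + 2) + elemSymm A (d + 1) • completeGrad A (m + 1) =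
          A * (elemSymm A (d + 1) • completeGrad A m + completeSymm A m • elemGrad A (d + 1)) := by
      rw [elemGrad_succ, completeGrad_succ]
      simp only [mul_add, mul_sub, mul_smul_comm, mul_one, smul_add, smul_sub, smul_smul]
      rw [mul_comm (completeSymm A m)]
      abel
    have hih := ih (d + 1)
    have hl := hookGrad_eq_add_hookGrad_succ A (d + 1) (m + 1)
    have hr := hookGrad_eq_add_hookGrad_succ A (d + 1) m
    rw [show d + 1 + (m + 1) = d + (m + 1) + 1 by lia] at hl
    rw [show d + 1 + m + 1 = d + (m + 1) + 1 by lia] at hih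
    rw [show d + 1 + m = d + (m + 1) by lia] at hr hih
    rw [hl, hih, hr, mul_add, ← hshift]
    abel

end Hook

section Expansion

theorem coeff_mul_eq_sum_Ico {R : Type*} [CommRing R] {f g : R⟦X⟧} (hf : coeff 0 f = 0)
    (hg : coeff 0 g = 0) {n : ℕ} (hn : n ≠ 0) :
    coeff n (f * g) = ∑ l ∈ Finset.Ico 1 n, coeff (n - l) f * coeff l g := by
  rw [mul_comm f, PowerSeries.coeff_mul, Finset.Nat.sum_antidiagonal_eq_sum_range_succ_mk,
    Finset.sum_range_succ, Nat.sub_self, hf, mul_zero, add_zero, Finset.range_eq_Ico,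
    Finset.sum_eq_sum_Ico_succ_bot (Nat.pos_of_ne_zero hn), hg, zero_mul, zero_add]
  exact Finset.sum_congr rfl fun l _ => mul_comm _ _

theorem sum_pow_mul_eq_sum_Icc {R : Type*} [CommRing R] (a : ℕ → R) {j : ℕ} (hj : j ≠ 0) (n : ℕ) :
    ∑ i ∈ Finset.range (n + 1), (i : R) ^ j * a i =
      ∑ d ∈ Finset.Icc 1 n,
        ((d : R) ^ j - ((d : R) - 1) ^ j) * ∑ i ∈ Finset.Ico d (n + 1), a i := by
  have htele : ∀ i : ℕ,
      ∑ d ∈ Finset.Ico 1 (i + 1), ((d : R) ^ j - ((d : R) - 1) ^ j) = (i : R) ^ j := by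
    intro i
    rw [Finset.sum_Ico_eq_sum_range, Nat.add_sub_cancel]
    simpa [add_comm 1, zero_pow hj] using Finset.sum_range_sub (fun d : ℕ => (d : R) ^ j) i
  simp only [Finset.mul_sum]
  rw [← Finset.Ico_add_one_right_eq_Icc, Finset.sum_Ico_Ico_comm, Finset.range_eq_Ico,
    Finset.sum_eq_sum_Ico_succ_bot (Nat.succ_pos n), Nat.cast_zero, zero_pow hj, zero_mul, zero_add]
  refine Finset.sum_congr rfl fun i _ => ?_
  rw [← Finset.sum_mul, htele]

variable {ι R : Type*} [Fintype ι] [DecidableEq ι] [CommRing R] (A : Matrix ι ι R)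

theorem coeff_iterate_euler_elemSeries_mul {j : ℕ} (hj : j ≠ 0) (n : ℕ) :
    coeff n ((euler R)^[j] (elemSeries A) * completeSeries A) =
      ∑ d ∈ Finset.Icc 1 n, ((d : R) ^ j - ((d : R) - 1) ^ j) * hook A d n := by
  simp only [hook, ← sum_pow_mul_eq_sum_Icc _ hj, PowerSeries.coeff_mul,
    Finset.Nat.sum_antidiagonal_eq_sum_range_succ_mk, coeff_iterate_euler, mul_assoc]
  rfl

theorem coeff_powerSumSeries {n : ℕ} (hn : n ≠ 0) :
    coeff n (powerSumSeries A) = (A ^ n).trace := by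
  obtain ⟨n, rfl⟩ := Nat.exists_eq_succ_of_ne_zero hn
  rw [powerSumSeries, ← trace_map_coeff, map_coeff_succ_powerMatrix]

theorem coeff_zero_powerSumSeries : coeff 0 (powerSumSeries A) = 0 := by
  rw [powerSumSeries, ← trace_map_coeff, map_coeff_zero_powerMatrix, trace_zero]

theorem trace_pow_eq_neg_sum_hook {n : ℕ} (hn : n ≠ 0) :
    (A ^ n).trace = -∑ d ∈ Finset.Icc 1 n, hook A d n := by
  have h := coeff_iterate_euler_elemSeries_mul A one_ne_zero n
  rw [Function.iterate_one, euler_elemSeries, neg_mul, mul_assoc, elemSeries_mul_completeSeries,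
    mul_one, map_neg, coeff_powerSumSeries A hn] at h
  simpa using (neg_eq_iff_eq_neg.mp h)

theorem matH_eq_coeff {N : ℕ} (g : Matrix (Fin N) (Fin N) ℂ) {n : ℕ} (hn : n ≠ 0) (j : ℕ) :
    matH (j + 1) n g = coeff n ((euler ℂ)^[j + 1] (elemSeries g) * completeSeries g) := by
  induction j generalizing n with
  | zero =>
    rw [zero_add, Function.iterate_one, euler_elemSeries, neg_mul, mul_assoc,
      elemSeries_mul_completeSeries, mul_one, map_neg, coeff_powerSumSeries g hn, matH]
  | succ j ih =>
    set F := (euler ℂ)^[j + 1] (elemSeries g) * completeSeries g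
    have hF : coeff 0 F = 0 := by
      rw [coeff_iterate_euler_elemSeries_mul g (Nat.succ_ne_zero j), Finset.Icc_eq_empty (by lia),
        Finset.sum_empty]
    have hderiv : (euler ℂ)^[j + 2] (elemSeries g) * completeSeries g =
        euler ℂ F - powerSumSeries g * F := by
      rw [Derivation.leibniz, euler_completeSeries, smul_eq_mul, smul_eq_mul,
        Function.iterate_succ_apply' _ (j + 1)]
      ring
    rw [hderiv, map_sub, coeff_euler, coeff_mul_eq_sum_Ico (coeff_zero_powerSumSeries g) hF hn,
      matH, ih hn, sub_eq_neg_add, ← Finset.sum_neg_distrib]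
    congr 1
    refine Finset.sum_congr rfl fun l hl => ?_
    rw [Finset.mem_Ico] at hl
    rw [ih (by lia), coeff_powerSumSeries g (by lia), neg_mul]

theorem matH_eq_sum_hook {N : ℕ} (g : Matrix (Fin N) (Fin N) ℂ) {j n : ℕ} (hj : j ≠ 0)
    (hn : n ≠ 0) :
    matH j n g = ∑ d ∈ Finset.Icc 1 (min n N), ((d : ℂ) ^ j - ((d : ℂ) - 1) ^ j) * hook g d n := by
  obtain ⟨i, rfl⟩ := Nat.exists_eq_succ_of_ne_zero hj
  rw [matH_eq_coeff g hn, coeff_iterate_euler_elemSeries_mul g hj]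
  refine (Finset.sum_subset (Finset.Icc_subset_Icc_right (min_le_left n N)) fun d hd hdN => ?_).symm
  rw [hook_of_card_lt, mul_zero]
  rw [Fintype.card_fin]
  simp only [Finset.mem_Icc] at hd hdN
  lia

end Expansion

section Integral

theorem integrable_of_continuous {X E : Type*} [TopologicalSpace X] [CompactSpace X]
    [MeasurableSpace X] [OpensMeasurableSpace X] [NormedAddCommGroup E] {μ : Measure X}
    [IsFiniteMeasure μ] {f : X → E} (hf : Continuous f) : Integrable f μ :=
  hf.integrable_of_hasCompactSupport (.of_compactSpace f)

variable {G E : Type*} [Group G] [TopologicalSpace G] [ContinuousMul G] [CompactSpace G]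
  [MeasurableSpace G] [BorelSpace G] [NormedAddCommGroup E] [NormedSpace ℝ E]

theorem integral_eq_zero_of_hasDerivAt_left_mul (μ : Measure G) [IsFiniteMeasure μ]
    [μ.IsMulLeftInvariant] {γ : ℝ → G} {f f' : G → E} (hf : Continuous f) (hf' : Continuous f')
    (hderiv : ∀ g t, HasDerivAt (fun s => f (γ s * g)) (f' (γ t * g)) t) :
    ∫ g, f' g ∂μ = 0 := by
  obtain ⟨C, hC⟩ := (isCompact_range hf').isBounded.exists_norm_le
  have hint : ∀ {u : G → E}, Continuous u → ∀ t, Integrable (fun g => u (γ t * g)) μ :=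
    fun hu t => integrable_of_continuous (hu.comp (continuous_const_mul (γ t)))
  have hconst : HasDerivAt (fun t => ∫ g, f (γ t * g) ∂μ) (∫ g, f' (γ 0 * g) ∂μ) 0 :=
    (hasDerivAt_integral_of_dominated_loc_of_deriv_le (bound := fun _ => C) Filter.univ_mem
      (.of_forall fun t => (hint hf t).aestronglyMeasurable) (hint hf 0)
      (hint hf' 0).aestronglyMeasurable (.of_forall fun g t _ => hC _ ⟨_, rfl⟩)
      (integrable_const C) (.of_forall fun g t _ => hderiv g t)).2
  rw [integral_mul_left_eq_self f' (γ 0)] at hconst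
  simp only [integral_mul_left_eq_self f] at hconst
  exact hconst.unique (hasDerivAt_const _ _)

theorem integral_sum_mul_conj_sum_of_orthonormal {X κ 𝕜 : Type*} [RCLike 𝕜] [TopologicalSpace X]
    [CompactSpace X] [MeasurableSpace X] [OpensMeasurableSpace X] {μ : Measure X}
    [IsFiniteMeasure μ] [DecidableEq κ] {s : Finset κ} {u : κ → X → 𝕜}
    (hu : ∀ i ∈ s, Continuous (u i))
    (horth : ∀ i ∈ s, ∀ j ∈ s, ∫ x, u i x * starRingEnd 𝕜 (u j x) ∂μ = if i = j then 1 else 0)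
    (a b : κ → 𝕜) :
    ∫ x, (∑ i ∈ s, a i * u i x) * starRingEnd 𝕜 (∑ j ∈ s, b j * u j x) ∂μ =
      ∑ i ∈ s, a i * starRingEnd 𝕜 (b i) := by
  have hint : ∀ i ∈ s, ∀ j ∈ s, Integrable
      (fun x => a i * starRingEnd 𝕜 (b j) * (u i x * starRingEnd 𝕜 (u j x))) μ :=
    fun i hi j hj => integrable_of_continuous
      (continuous_const.mul ((hu i hi).mul (RCLike.continuous_conj.comp (hu j hj))))
  have hterm : ∀ i j x, a i * u i x * (starRingEnd 𝕜 (b j) * starRingEnd 𝕜 (u j x)) =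
      a i * starRingEnd 𝕜 (b j) * (u i x * starRingEnd 𝕜 (u j x)) :=
    fun _ _ _ => mul_mul_mul_comm _ _ _ _
  simp only [map_sum, map_mul, Finset.sum_mul_sum, hterm]
  rw [integral_finsetSum _ fun i hi => integrable_finsetSum _ (hint i hi)]
  refine Finset.sum_congr rfl fun i hi => ?_
  rw [integral_finsetSum _ (hint i hi)]
  simp only [integral_const_mul]
  rw [Finset.sum_congr rfl fun j hj => by rw [horth i hi j hj]]
  simp [hi]

end Integral

section Unitary

theorem hasDerivAt_expUnitary {A : Type*} [NormedRing A] [NormedAlgebra ℂ A] [StarRing A]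
    [ContinuousStar A] [CompleteSpace A] [StarModule ℂ A] (a : selfAdjoint A) (t : ℝ) :
    HasDerivAt (fun s : ℝ => (selfAdjoint.expUnitary (s • a)).1)
      (Complex.I • a.1 * (selfAdjoint.expUnitary (t • a)).1) t := by
  let _ : NormedAlgebra ℚ A := NormedAlgebra.restrictScalars ℚ ℂ A
  have h := hasDerivAt_exp_smul_const' (𝕂 := ℝ) (Complex.I • a.1) t
  simpa only [selfAdjoint.expUnitary_coe, selfAdjoint.val_smul, smul_comm Complex.I] using h

variable {ι : Type*} [Fintype ι] [DecidableEq ι]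

instance compactSpace_unitaryGroup {𝕜 : Type*} [RCLike 𝕜] : CompactSpace (unitaryGroup ι 𝕜) := by
  let K : Set (Matrix ι ι 𝕜) := Set.univ.pi fun _ => Set.univ.pi fun _ => Metric.closedBall 0 1
  have hK : IsCompact K :=
    isCompact_univ_pi fun _ => isCompact_univ_pi fun _ => isCompact_closedBall _ _
  have hsub : (unitaryGroup ι 𝕜 : Set (Matrix ι ι 𝕜)) ⊆ K := fun U hU i _ j _ =>
    mem_closedBall_zero_iff.mpr (entry_norm_bound_of_unitary hU i j)
  exact isCompact_iff_compactSpace.mp (hK.of_isClosed_subset isClosed_unitary hsub)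

theorem trace_mul_mul_conjTranspose_pow_succ {R : Type*} [CommRing R] [StarRing R]
    (g : unitaryGroup ι R) (M : Matrix ι ι R) (n : ℕ) :
    (g.1 * M * (g.1 ^ (n + 1))ᴴ).trace = (M * (g.1 ^ n)ᴴ).trace := by
  have hg : g.1ᴴ * g.1 = 1 := mem_unitaryGroup_iff'.mp g.2
  rw [pow_succ', conjTranspose_mul, trace_mul_cycle, mul_assoc, mul_assoc, ← mul_assoc g.1ᴴ]
  rw [hg, one_mul, trace_mul_comm]

open scoped Matrix.Norms.L2Operator

/-- `G` is the gradient of the function `f` on the unitary group: the derivative of `f` along the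
curve `s ↦ exp (i s X) g`, with `X` Hermitian, is `i tr (X G)`. -/
structure HasGrad (f : unitaryGroup ι ℂ → ℂ) (G : unitaryGroup ι ℂ → Matrix ι ι ℂ) : Prop where
  continuous : Continuous f
  continuous_grad : Continuous G
  hasDerivAt : ∀ (X : selfAdjoint (Matrix ι ι ℂ)) (g : unitaryGroup ι ℂ) (t : ℝ),
    HasDerivAt (fun s : ℝ => f (selfAdjoint.expUnitary (s • X) * g))
      (Complex.I * (X.1 * G (selfAdjoint.expUnitary (t • X) * g)).trace) t

namespace HasGrad

variable {f f' : unitaryGroup ι ℂ → ℂ} {G G' : unitaryGroup ι ℂ → Matrix ι ι ℂ}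

theorem const (c : ℂ) : HasGrad (fun _ : unitaryGroup ι ℂ => c) fun _ => 0 where
  continuous := continuous_const
  continuous_grad := continuous_const
  hasDerivAt _ _ t := by simpa using hasDerivAt_const t c

theorem add (h : HasGrad f G) (h' : HasGrad f' G') :
    HasGrad (fun g => f g + f' g) fun g => G g + G' g where
  continuous := h.continuous.add h'.continuous
  continuous_grad := h.continuous_grad.add h'.continuous_grad
  hasDerivAt X g t := by
    simpa only [mul_add, trace_add] using (h.hasDerivAt X g t).fun_add (h'.hasDerivAt X g t)

theorem mul (h : HasGrad f G) (h' : HasGrad f' G') :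
    HasGrad (fun g => f g * f' g) fun g => f g • G' g + f' g • G g where
  continuous := h.continuous.mul h'.continuous
  continuous_grad :=
    (h.continuous.smul h'.continuous_grad).add (h'.continuous.smul h.continuous_grad)
  hasDerivAt X g t := by
    refine ((h.hasDerivAt X g t).fun_mul (h'.hasDerivAt X g t)).congr_deriv ?_
    simp only [mul_add, mul_smul_comm, trace_add, trace_smul, smul_eq_mul]
    ring

theorem const_mul (c : ℂ) (h : HasGrad f G) : HasGrad (fun g => c * f g) fun g => c • G g := by
  simpa only [smul_zero, add_zero] using (const c).mul h

theorem sum {κ : Type*} {F : κ → unitaryGroup ι ℂ → ℂ} {G : κ → unitaryGroup ι ℂ → Matrix ι ι ℂ}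
    (s : Finset κ) (h : ∀ k ∈ s, HasGrad (F k) (G k)) :
    HasGrad (fun g => ∑ k ∈ s, F k g) fun g => ∑ k ∈ s, G k g where
  continuous := continuous_finsetSum s fun k hk => (h k hk).continuous
  continuous_grad := continuous_finsetSum s fun k hk => (h k hk).continuous_grad
  hasDerivAt X g t := by
    simpa only [Finset.mul_sum, trace_sum] using
      HasDerivAt.fun_sum fun k hk => (h k hk).hasDerivAt X g t

theorem conj (h : HasGrad f G) :
    HasGrad (fun g => starRingEnd ℂ (f g)) fun g => -(G g)ᴴ where
  continuous := Complex.continuous_conj.comp h.continuous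
  continuous_grad := h.continuous_grad.matrix_conjTranspose.neg
  hasDerivAt X g t := by
    refine (h.hasDerivAt X g t).star.congr_deriv ?_
    have hX : X.1ᴴ = X.1 := X.2
    rw [star_mul', ← trace_conjTranspose, conjTranspose_mul, hX, trace_mul_comm, mul_neg, trace_neg]
    simp

end HasGrad

theorem hasGrad_trace_mul_pow (C : Matrix ι ι ℂ) (k : ℕ) :
    HasGrad (fun g => (C * g.1 ^ k).trace)
      fun g => ∑ a ∈ Finset.range k, g.1 ^ (a + 1) * C * g.1 ^ (k - 1 - a) where
  continuous := by fun_prop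
  continuous_grad := by fun_prop
  hasDerivAt X g t := by
    set u : ℝ → unitaryGroup ι ℂ := fun s => selfAdjoint.expUnitary (s • X) * g
    have hu : HasDerivAt (fun s => (u s).1) (Complex.I • X.1 * (u t).1) t :=
      ((hasDerivAt_expUnitary X t).mul_const g.1).congr_deriv (mul_assoc _ _ _)
    have htrace := (traceLinearMap ι ℝ ℂ).toContinuousLinearMap.hasFDerivAt.comp_hasDerivAt t
      ((hu.fun_pow' k).const_mul C)
    refine htrace.congr_deriv ?_
    rw [Finset.mul_sum, map_sum, Finset.mul_sum, trace_sum, Finset.mul_sum]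
    refine Finset.sum_congr rfl fun a _ => ?_
    change (C * ((u t).1 ^ (k - 1 - a) * (Complex.I • X.1 * (u t).1) * (u t).1 ^ a)).trace =
      Complex.I * (X.1 * ((u t).1 ^ (a + 1) * C * (u t).1 ^ (k - 1 - a))).trace
    generalize (u t).1 = V
    rw [smul_mul, mul_smul_comm, smul_mul, mul_smul_comm, trace_smul, smul_eq_mul]
    congr 1
    calc (C * (V ^ (k - 1 - a) * (X.1 * V) * V ^ a)).trace
        = ((C * V ^ (k - 1 - a)) * (X.1 * V ^ (a + 1))).trace := by
          rw [pow_succ']; simp only [mul_assoc]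
      _ = (X.1 * (V ^ (a + 1) * C * V ^ (k - 1 - a))).trace := by
          rw [trace_mul_comm]; simp only [mul_assoc]

theorem hasGrad_trace_pow (k : ℕ) :
    HasGrad (fun g : unitaryGroup ι ℂ => (g.1 ^ k).trace) fun g => (k : ℂ) • g.1 ^ k := by
  have hgrad : ∀ g : unitaryGroup ι ℂ,
      ∑ a ∈ Finset.range k, g.1 ^ (a + 1) * 1 * g.1 ^ (k - 1 - a) = (k : ℂ) • g.1 ^ k := by
    intro g
    rw [Finset.sum_congr rfl (g := fun _ => g.1 ^ k), Finset.sum_const, Finset.card_range,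
      Nat.cast_smul_eq_nsmul]
    intro a ha
    rw [mul_one, ← pow_add]
    congr 1
    have := Finset.mem_range.mp ha
    lia
  simpa only [one_mul, hgrad] using hasGrad_trace_mul_pow (1 : Matrix ι ι ℂ) k

theorem hasGrad_coeff_powerSumSeries (n : ℕ) :
    HasGrad (fun g : unitaryGroup ι ℂ => coeff n (powerSumSeries g.1))
      fun g => (n : ℂ) • (powerMatrix g.1).map (coeff n) := by
  cases n with
  | zero =>
    simpa only [coeff_zero_powerSumSeries, Nat.cast_zero, zero_smul] using HasGrad.const 0
  | succ n =>
    simpa only [coeff_powerSumSeries _ (Nat.succ_ne_zero n), map_coeff_succ_powerMatrix] using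
      hasGrad_trace_pow (n + 1)

theorem hasGrad_coeff {σ : ℂ} {U : unitaryGroup ι ℂ → ℂ⟦X⟧} (h0 : ∀ g, coeff 0 (U g) = 1)
    (hU : ∀ g, euler ℂ (U g) = σ • (powerSumSeries g.1 * U g)) (n : ℕ) :
    HasGrad (fun g => coeff n (U g)) fun g => seriesGrad σ (U g) g.1 n := by
  induction n using Nat.strong_induction_on with
  | _ n ih =>
  rcases eq_or_ne n 0 with rfl | hn
  · simpa only [h0, seriesGrad_zero] using HasGrad.const 1
  have hterm : ∀ p ∈ antidiagonal n, HasGrad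
      (fun g => coeff p.1 (powerSumSeries g.1) * coeff p.2 (U g))
      fun g => coeff p.1 (powerSumSeries g.1) • seriesGrad σ (U g) g.1 p.2 +
        coeff p.2 (U g) • (p.1 : ℂ) • (powerMatrix g.1).map (coeff p.1) := by
    rintro ⟨_ | a, b⟩ hp
    · simpa only [coeff_zero_powerSumSeries, Nat.cast_zero, zero_mul, zero_smul, smul_zero,
        add_zero] using HasGrad.const 0
    · rw [mem_antidiagonal] at hp
      exact (hasGrad_coeff_powerSumSeries (a + 1)).mul (ih b (by lia))
  have hn' : (n : ℂ) ≠ 0 := Nat.cast_ne_zero.mpr hn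
  convert ((HasGrad.sum _ hterm).const_mul σ).const_mul (n : ℂ)⁻¹ using 2 with g g
  · rw [eq_inv_mul_iff_mul_eq₀ hn', ← coeff_euler, hU, PowerSeries.coeff_smul,
      PowerSeries.coeff_mul, smul_eq_mul]
  · rw [← natCast_smul_seriesGrad g.1 (hU g), inv_smul_smul₀ hn']

theorem hasGrad_elemSymm (n : ℕ) :
    HasGrad (fun g : unitaryGroup ι ℂ => elemSymm g.1 n) fun g => elemGrad g.1 n :=
  hasGrad_coeff (fun g => coeff_zero_elemSeries g.1)
    (fun g => by rw [euler_elemSeries, neg_one_smul]) n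

theorem hasGrad_completeSymm (n : ℕ) :
    HasGrad (fun g : unitaryGroup ι ℂ => completeSymm g.1 n) fun g => completeGrad g.1 n :=
  hasGrad_coeff (fun g => coeff_zero_completeSeries g.1)
    (fun g => by rw [euler_completeSeries, one_smul]) n

theorem hasGrad_hook (d n : ℕ) :
    HasGrad (fun g : unitaryGroup ι ℂ => hook g.1 d n) fun g => hookGrad g.1 d n :=
  .sum _ fun i _ => (hasGrad_elemSymm i).mul (hasGrad_completeSymm (n - i))

variable [MeasurableSpace (unitaryGroup ι ℂ)]

/-- `D` is the divergence, up to a factor `i` and with respect to the measure `μ`, of the vector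
field `g ↦ i V(g) g` on the unitary group. It is encoded weakly, by testing against the functions
that have a gradient. -/
structure HasDiv (μ : Measure (unitaryGroup ι ℂ)) (V : unitaryGroup ι ℂ → Matrix ι ι ℂ)
    (D : unitaryGroup ι ℂ → ℂ) : Prop where
  continuous_field : Continuous V
  continuous_div : Continuous D
  integral_eq_zero : ∀ {w W}, HasGrad w W → ∫ g, (D g * w g + (V g * W g).trace) ∂μ = 0

variable {μ : Measure (unitaryGroup ι ℂ)}

namespace HasDiv

variable {V : unitaryGroup ι ℂ → Matrix ι ι ℂ} {f D : unitaryGroup ι ℂ → ℂ}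
  {G : unitaryGroup ι ℂ → Matrix ι ι ℂ}

theorem smul (hf : HasGrad f G) (hV : HasDiv μ V D) :
    HasDiv μ (fun g => f g • V g) fun g => f g * D g + (G g * V g).trace where
  continuous_field := hf.continuous.smul hV.continuous_field
  continuous_div := (hf.continuous.mul hV.continuous_div).add
    (hf.continuous_grad.mul hV.continuous_field).matrix_trace
  integral_eq_zero {w W} hw := by
    rw [← hV.integral_eq_zero (hf.mul hw)]
    refine integral_congr_ae (.of_forall fun g => ?_)
    simp only [mul_add, smul_mul, mul_smul_comm, trace_add, trace_smul, smul_eq_mul,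
      trace_mul_comm (G g)]
    ring

variable [BorelSpace (unitaryGroup ι ℂ)] [IsFiniteMeasure μ]

theorem sum {κ : Type*} {V : κ → unitaryGroup ι ℂ → Matrix ι ι ℂ} {D : κ → unitaryGroup ι ℂ → ℂ}
    (s : Finset κ) (h : ∀ k ∈ s, HasDiv μ (V k) (D k)) :
    HasDiv μ (fun g => ∑ k ∈ s, V k g) fun g => ∑ k ∈ s, D k g where
  continuous_field := continuous_finsetSum s fun k hk => (h k hk).continuous_field
  continuous_div := continuous_finsetSum s fun k hk => (h k hk).continuous_div
  integral_eq_zero {w W} hw := by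
    simp only [Finset.sum_mul, trace_sum, ← Finset.sum_add_distrib]
    rw [integral_finsetSum]
    · exact Finset.sum_eq_zero fun k hk => (h k hk).integral_eq_zero hw
    · intro k hk
      exact integrable_of_continuous (((h k hk).continuous_div.mul hw.continuous).add
        ((h k hk).continuous_field.mul hw.continuous_grad).matrix_trace)

theorem add {V' : unitaryGroup ι ℂ → Matrix ι ι ℂ} {D' : unitaryGroup ι ℂ → ℂ}
    (h : HasDiv μ V D) (h' : HasDiv μ V' D') :
    HasDiv μ (fun g => V g + V' g) fun g => D g + D' g := by
  simpa using sum (V := ![V, V']) (D := ![D, D']) Finset.univ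
    (Fin.forall_fin_two.mpr ⟨fun _ => h, fun _ => h'⟩)

end HasDiv

variable [BorelSpace (unitaryGroup ι ℂ)] [IsFiniteMeasure μ]

theorem integral_trace_mul_grad_eq_zero [μ.IsMulLeftInvariant] {f : unitaryGroup ι ℂ → ℂ}
    {G : unitaryGroup ι ℂ → Matrix ι ι ℂ} (h : HasGrad f G) (C : Matrix ι ι ℂ) :
    ∫ g, (C * G g).trace ∂μ = 0 := by
  have hcont : ∀ Y : Matrix ι ι ℂ, Continuous fun g => (Y * G g).trace := fun Y =>
    (continuous_const.mul h.continuous_grad).matrix_trace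
  have hint : ∀ Y : Matrix ι ι ℂ, Integrable (fun g => (Y * G g).trace) μ := fun Y =>
    integrable_of_continuous (hcont Y)
  have hself : ∀ X : selfAdjoint (Matrix ι ι ℂ), ∫ g, (X.1 * G g).trace ∂μ = 0 := by
    intro X
    have h0 := integral_eq_zero_of_hasDerivAt_left_mul μ h.continuous
      (f' := fun g => Complex.I * (X.1 * G g).trace) (continuous_const.mul (hcont X.1))
      (h.hasDerivAt X)
    rw [integral_const_mul] at h0
    exact (mul_eq_zero.mp h0).resolve_left Complex.I_ne_zero
  rw [← realPart_add_I_smul_imaginaryPart C]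
  simp only [add_mul, smul_mul, trace_add, trace_smul, smul_eq_mul]
  rw [integral_add (hint _) ((hint _).const_mul _), integral_const_mul, hself, hself, mul_zero,
    add_zero]

theorem hasDiv_const [μ.IsMulLeftInvariant] (C : Matrix ι ι ℂ) :
    HasDiv μ (fun _ => C) fun _ => 0 where
  continuous_field := continuous_const
  continuous_div := continuous_const
  integral_eq_zero hw := by
    simpa only [zero_mul, zero_add] using integral_trace_mul_grad_eq_zero hw C

theorem hasDiv_pow [μ.IsMulLeftInvariant] (k : ℕ) :
    HasDiv μ (fun g => g.1 ^ k)
      fun g => ∑ a ∈ Finset.range k, (g.1 ^ (a + 1)).trace * (g.1 ^ (k - 1 - a)).trace := by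
  have h : HasDiv μ _ _ := HasDiv.sum Finset.univ fun i _ => HasDiv.sum Finset.univ fun j _ =>
    (hasDiv_const (single i j 1)).smul (hasGrad_trace_mul_pow (single j i 1) k)
  convert h using 2 with g g
  · conv_lhs => rw [matrix_eq_sum_single (g.1 ^ k)]
    simp [trace_single_mul, smul_single]
  · have hblock : ∀ (A B : Matrix ι ι ℂ) (i j : ι),
        (A * single j i 1 * B * single i j 1).trace = A j j * B i i := by
      intro A B i j
      rw [mul_assoc, mul_assoc, ← mul_assoc (single j i 1), single_mul_mul_single,
        trace_mul_single]
      simp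
    simp only [mul_zero, zero_add, Finset.sum_mul, trace_sum, hblock]
    simp only [trace, diag_apply, Finset.sum_mul_sum]
    rw [Finset.sum_comm]
    refine Eq.trans ?_ Finset.sum_comm
    exact Finset.sum_congr rfl fun j _ => Finset.sum_comm

theorem hasDiv_powerMatrix [μ.IsMulLeftInvariant] (n : ℕ) :
    HasDiv μ (fun g => (powerMatrix g.1).map (coeff n)) fun g =>
      coeff n (powerSumSeries g.1 * (Fintype.card ι + powerSumSeries g.1)) := by
  have hcoeff : ∀ (g : unitaryGroup ι ℂ) b,
      coeff b ((Fintype.card ι : ℂ⟦X⟧) + powerSumSeries g.1) = (g.1 ^ b).trace := by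
    intro g b
    rw [← map_coeff_one_add_powerMatrix, trace_map_coeff, trace_add, trace_one, ← powerSumSeries]
  cases n with
  | zero =>
    simp only [map_coeff_zero_powerMatrix, PowerSeries.coeff_mul, hcoeff]
    simpa [coeff_zero_powerSumSeries, -PowerSeries.coeff_zero_eq_constantCoeff] using
      hasDiv_const (μ := μ) (0 : Matrix ι ι ℂ)
  | succ n =>
    simp only [map_coeff_succ_powerMatrix, PowerSeries.coeff_mul, hcoeff,
      Finset.Nat.sum_antidiagonal_eq_sum_range_succ_mk]
    convert hasDiv_pow (μ := μ) (ι := ι) (n + 1) using 2 with g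
    rw [Finset.sum_range_succ', coeff_zero_powerSumSeries, zero_mul, add_zero]
    refine Finset.sum_congr rfl fun a _ => ?_
    rw [coeff_powerSumSeries _ (Nat.succ_ne_zero a)]
    congr 3
    lia

/-- `f` has gradient `G`, and `G` has divergence `L`: thus `-L` is the Laplacian of `f`. -/
structure HasLaplacian (μ : Measure (unitaryGroup ι ℂ)) (f : unitaryGroup ι ℂ → ℂ)
    (G : unitaryGroup ι ℂ → Matrix ι ι ℂ) (L : unitaryGroup ι ℂ → ℂ) : Prop where
  hasGrad : HasGrad f G
  hasDiv : HasDiv μ G L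

namespace HasLaplacian

variable {f f' L L' : unitaryGroup ι ℂ → ℂ} {G G' : unitaryGroup ι ℂ → Matrix ι ι ℂ}

theorem add (h : HasLaplacian μ f G L) (h' : HasLaplacian μ f' G' L') :
    HasLaplacian μ (fun g => f g + f' g) (fun g => G g + G' g) fun g => L g + L' g :=
  ⟨h.hasGrad.add h'.hasGrad, h.hasDiv.add h'.hasDiv⟩

theorem mul (h : HasLaplacian μ f G L) (h' : HasLaplacian μ f' G' L') :
    HasLaplacian μ (fun g => f g * f' g) (fun g => f g • G' g + f' g • G g)
      fun g => f g * L' g + f' g * L g + 2 * (G g * G' g).trace where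
  hasGrad := h.hasGrad.mul h'.hasGrad
  hasDiv := by
    convert (h'.hasDiv.smul h.hasGrad).add (h.hasDiv.smul h'.hasGrad) using 2 with g
    rw [trace_mul_comm (G' g)]
    ring

end HasLaplacian

theorem hasLaplacian_coeff [μ.IsMulLeftInvariant] {σ : ℂ}
    {U : unitaryGroup ι ℂ → ℂ⟦X⟧} (hσ : σ * σ = 1) (h0 : ∀ g, coeff 0 (U g) = 1)
    (hU : ∀ g, euler ℂ (U g) = σ • (powerSumSeries g.1 * U g)) (n : ℕ) :
    HasLaplacian μ (fun g => coeff n (U g)) (fun g => seriesGrad σ (U g) g.1 n)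
      fun g => n * (Fintype.card ι + σ * (n - 1)) * coeff n (U g) := by
  refine ⟨hasGrad_coeff h0 hU n, ?_⟩
  have hdiv := HasDiv.sum (antidiagonal n) fun p _ => (hasDiv_powerMatrix (μ := μ) p.2).smul
    ((hasGrad_coeff h0 hU p.1).const_mul σ)
  convert hdiv using 2 with g g
  · simp only [seriesGrad, map_coeff_smul, PowerSeries.coeff_smul, smul_eq_mul]
  · have hcoeff := congrArg (coeff n) (card_mul_euler_add_smul g.1 hσ (hU g))
    simp only [map_add, map_sub, map_nsmul, PowerSeries.coeff_smul, coeff_euler,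
      smul_eq_mul] at hcoeff
    rw [nsmul_eq_mul] at hcoeff
    simp only [Finset.sum_add_distrib, smul_mul, trace_smul, smul_eq_mul, ← Finset.mul_sum,
      sum_trace_seriesGrad_mul, mul_assoc, ← PowerSeries.coeff_mul]
    linear_combination hcoeff - coeff n (U g * (powerMatrix g.1 * powerMatrix g.1).trace) * hσ

theorem HasDiv.mul_integral_mul_conj {f f' : unitaryGroup ι ℂ → ℂ}
    {G G' : unitaryGroup ι ℂ → Matrix ι ι ℂ} {c : ℂ} (hG : HasDiv μ G fun g => c * f g)
    (h' : HasGrad f' G') :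
    c * ∫ g, f g * starRingEnd ℂ (f' g) ∂μ = ∫ g, (G g * (G' g)ᴴ).trace ∂μ := by
  have hleft : Integrable (fun g => c * f g * starRingEnd ℂ (f' g)) μ :=
    integrable_of_continuous (hG.continuous_div.mul h'.conj.continuous)
  have hright : Integrable (fun g => (G g * (G' g)ᴴ).trace) μ :=
    integrable_of_continuous
      (hG.continuous_field.mul h'.continuous_grad.matrix_conjTranspose).matrix_trace
  have h := hG.integral_eq_zero h'.conj
  simp only [mul_neg, trace_neg, ← sub_eq_add_neg] at h
  rw [integral_sub hleft hright, sub_eq_zero] at h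
  simpa only [mul_assoc, integral_const_mul] using h

theorem integral_mul_conj_eq_zero_of_eigenvalue_ne {f f' : unitaryGroup ι ℂ → ℂ}
    {G G' : unitaryGroup ι ℂ → Matrix ι ι ℂ} {a b : ℝ} (hab : a ≠ b)
    (h : HasLaplacian μ f G fun g => a * f g) (h' : HasLaplacian μ f' G' fun g => b * f' g) :
    ∫ g, f g * starRingEnd ℂ (f' g) ∂μ = 0 := by
  have hstar : ∀ M M' : Matrix ι ι ℂ, starRingEnd ℂ (M' * Mᴴ).trace = (M * M'ᴴ).trace := by
    intro M M'
    rw [starRingEnd_apply, ← trace_conjTranspose, conjTranspose_mul, conjTranspose_conjTranspose]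
  have hleft := h.hasDiv.mul_integral_mul_conj h'.hasGrad
  have hright := congrArg (starRingEnd ℂ) (h'.hasDiv.mul_integral_mul_conj h.hasGrad)
  rw [map_mul, Complex.conj_ofReal, ← integral_conj, ← integral_conj] at hright
  simp only [map_mul, Complex.conj_conj, hstar, mul_comm (starRingEnd ℂ (f' _))] at hright
  have hdiff : ((a : ℂ) - b) * ∫ g, f g * starRingEnd ℂ (f' g) ∂μ = 0 := by
    rw [sub_mul, hleft, hright, sub_self]
  exact (mul_eq_zero.mp hdiff).resolve_left (sub_ne_zero.mpr (Complex.ofReal_injective.ne hab))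

theorem hasLaplacian_elemSymm [μ.IsMulLeftInvariant] (n : ℕ) :
    HasLaplacian μ (fun g => elemSymm g.1 n) (fun g => elemGrad g.1 n)
      fun g => n * (Fintype.card ι + -1 * (n - 1)) * elemSymm g.1 n :=
  hasLaplacian_coeff (by norm_num) (fun g => coeff_zero_elemSeries g.1)
    (fun g => by rw [euler_elemSeries, neg_one_smul]) n

theorem hasLaplacian_completeSymm [μ.IsMulLeftInvariant] (n : ℕ) :
    HasLaplacian μ (fun g => completeSymm g.1 n) (fun g => completeGrad g.1 n)
      fun g => n * (Fintype.card ι + 1 * (n - 1)) * completeSymm g.1 n :=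
  hasLaplacian_coeff (one_mul 1) (fun g => coeff_zero_completeSeries g.1)
    (fun g => by rw [euler_completeSeries, one_smul]) n

theorem hasLaplacian_hook [μ.IsMulLeftInvariant] {d n : ℕ} (hdn : d ≤ n + 1) :
    HasLaplacian μ (fun g => hook g.1 d n) (fun g => hookGrad g.1 d n)
      fun g => n * (Fintype.card ι + n + 1 - 2 * d) * hook g.1 d n := by
  induction hdn using Nat.decreasingInduction with
  | self =>
    simp only [hook_of_lt _ n.lt_succ_self, hookGrad_of_lt _ n.lt_succ_self, mul_zero]
    exact ⟨.const 0, hasDiv_const 0⟩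
  | of_succ d hd ih =>
    obtain ⟨m, rfl⟩ := Nat.exists_eq_add_of_le (Nat.le_of_lt_succ hd)
    convert ((hasLaplacian_elemSymm d).mul (hasLaplacian_completeSymm m)).add ih using 2 with g g g
    · exact hook_eq_add_hook_succ g.1 d m
    · exact hookGrad_eq_add_hookGrad_succ g.1 d m
    · rw [trace_elemGrad_mul_completeGrad, hook_eq_add_hook_succ]
      push_cast
      ring

theorem integral_hook_mul_conj_hook_of_ne [μ.IsMulLeftInvariant] {d e n : ℕ} (hd : d ≤ n)
    (he : e ≤ n) (hde : d ≠ e) :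
    ∫ g : unitaryGroup ι ℂ, hook g.1 d n * starRingEnd ℂ (hook g.1 e n) ∂μ = 0 := by
  have heigen : ∀ i ≤ n, HasLaplacian μ (fun g => hook g.1 i n) (fun g => hookGrad g.1 i n)
      fun g => (n * (Fintype.card ι + n + 1 - 2 * i) : ℝ) * hook g.1 i n := fun i hi => by
    simpa using hasLaplacian_hook (μ := μ) (Nat.le_succ_of_le hi)
  have hn : (n : ℝ) ≠ 0 := by
    rw [Nat.cast_ne_zero]
    lia
  refine integral_mul_conj_eq_zero_of_eigenvalue_ne ?_ (heigen d hd) (heigen e he)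
  simpa [hn] using hde

end Unitary

section Pairing

variable {ι : Type*} [Fintype ι] [DecidableEq ι] [MeasurableSpace (unitaryGroup ι ℂ)]

/-- The inner product of a hook function with the power sum of the same degree. -/
noncomputable def hookPairing (μ : Measure (unitaryGroup ι ℂ)) (d n : ℕ) : ℂ :=
  ∫ g, hook g.1 d n * starRingEnd ℂ (g.1 ^ n).trace ∂μ

/-- The inner product of the gradient of a hook function with that of the power sum of the same
degree, divided by the factor `n` in `hasGrad_trace_pow`. -/
noncomputable def hookGradPairing (μ : Measure (unitaryGroup ι ℂ)) (d n : ℕ) : ℂ :=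
  ∫ g, (hookGrad g.1 d n * (g.1 ^ n)ᴴ).trace ∂μ

/-- The increment of `hookGradPairing` when the degree grows by one; see `hookGradPairing_succ`. -/
noncomputable def elemGradPairing (μ : Measure (unitaryGroup ι ℂ)) (d m : ℕ) : ℂ :=
  ∫ g, completeSymm g.1 m * (elemGrad g.1 d * (g.1 ^ (d + m))ᴴ).trace ∂μ

variable {μ : Measure (unitaryGroup ι ℂ)}

theorem elemGradPairing_zero (m : ℕ) : elemGradPairing μ 0 m = 0 := by
  simp [elemGradPairing, elemGrad, seriesGrad_zero]

theorem hookPairing_of_lt {d n : ℕ} (h : n < d) : hookPairing μ d n = 0 := by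
  simp [hookPairing, hook_of_lt _ h]

theorem hookPairing_zero [IsProbabilityMeasure μ] (n : ℕ) :
    hookPairing μ 0 n = if n = 0 then (Fintype.card ι : ℂ) else 0 := by
  split_ifs with h <;> simp [hookPairing, hook_zero, h]

theorem hookGradPairing_of_lt {d n : ℕ} (h : n < d) : hookGradPairing μ d n = 0 := by
  simp [hookGradPairing, hookGrad_of_lt _ h]

variable [BorelSpace (unitaryGroup ι ℂ)]

section

variable [IsFiniteMeasure μ]

theorem mul_hookPairing_eq_hookGradPairing [μ.IsMulLeftInvariant] {d n : ℕ} (hd : d ≤ n + 1)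
    (hn : n ≠ 0) :
    (Fintype.card ι + n + 1 - 2 * d) * hookPairing μ d n = hookGradPairing μ d n := by
  have h := (hasLaplacian_hook (μ := μ) hd).hasDiv.mul_integral_mul_conj (hasGrad_trace_pow n)
  simp only [conjTranspose_smul, mul_smul_comm, trace_smul, star_natCast, smul_eq_mul, mul_assoc,
    integral_const_mul] at h
  exact mul_left_cancel₀ (Nat.cast_ne_zero.mpr hn) h

theorem hookGradPairing_succ (d m : ℕ) :
    hookGradPairing μ (d + 1) (d + m + 1) =
      hookGradPairing μ (d + 1) (d + m) + elemGradPairing μ (d + 1) m := by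
  have hhook := (hasGrad_hook (ι := ι) (d + 1) (d + m)).continuous_grad
  have helem := (hasGrad_elemSymm (ι := ι) (d + 1)).continuous_grad
  have hcomplete := (hasGrad_completeSymm (ι := ι) m).continuous
  rw [hookGradPairing, hookGradPairing, elemGradPairing, ← integral_add]
  · refine integral_congr_ae (.of_forall fun g => ?_)
    dsimp only
    rw [hookGrad_succ_succ, add_mul, trace_add, trace_mul_mul_conjTranspose_pow_succ, smul_mul,
      trace_smul, smul_eq_mul, add_right_comm d 1 m]
  all_goals exact integrable_of_continuous (by fun_prop)

theorem elemGradPairing_succ (d m : ℕ) :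
    elemGradPairing μ (d + 1) m =
      elemGradPairing μ d m - hookPairing μ d (d + m) + hookPairing μ (d + 1) (d + m) := by
  have hpoint : ∀ g : unitaryGroup ι ℂ,
      completeSymm g.1 m * (elemGrad g.1 (d + 1) * (g.1 ^ (d + 1 + m))ᴴ).trace =
        completeSymm g.1 m * (elemGrad g.1 d * (g.1 ^ (d + m))ᴴ).trace -
          hook g.1 d (d + m) * starRingEnd ℂ (g.1 ^ (d + m)).trace +
            hook g.1 (d + 1) (d + m) * starRingEnd ℂ (g.1 ^ (d + m)).trace := by
    intro g
    rw [elemGrad_succ, add_right_comm, trace_mul_mul_conjTranspose_pow_succ, sub_mul, trace_sub,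
      smul_mul, one_mul, trace_smul, trace_conjTranspose, hook_eq_add_hook_succ, starRingEnd_apply,
      smul_eq_mul]
    ring
  have hhook := fun e => (hasGrad_hook (ι := ι) e (d + m)).continuous
  have helem := (hasGrad_elemSymm (ι := ι) d).continuous_grad
  have hcomplete := (hasGrad_completeSymm (ι := ι) m).continuous
  simp only [elemGradPairing, hpoint]
  rw [integral_add, integral_sub]
  · rfl
  all_goals exact integrable_of_continuous (by fun_prop)

end

variable [μ.IsMulLeftInvariant] [IsProbabilityMeasure μ]

theorem hookPairing_succ_of_elemGradPairing {d : ℕ} (hd : d < Fintype.card ι)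
    (h : ∀ m, elemGradPairing μ d m - hookPairing μ d (d + m) =
      if m = 0 then (d : ℂ) - Fintype.card ι else 0) (m : ℕ) :
    hookPairing μ (d + 1) (d + m + 1) = -1 := by
  have hne : ∀ m : ℕ, (Fintype.card ι : ℂ) + m - d ≠ 0 := by
    intro m hzero
    rw [sub_eq_zero] at hzero
    norm_cast at hzero
    lia
  have heigen : ∀ m : ℕ, ((Fintype.card ι : ℂ) + m - d) * hookPairing μ (d + 1) (d + m + 1) =
      hookGradPairing μ (d + 1) (d + m + 1) := by
    intro m
    rw [← mul_hookPairing_eq_hookGradPairing (by lia) (Nat.succ_ne_zero _)]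
    push_cast
    ring
  have hstep : ∀ m, hookGradPairing μ (d + 1) (d + m + 1) = hookGradPairing μ (d + 1) (d + m) +
      ((if m = 0 then (d : ℂ) - Fintype.card ι else 0) + hookPairing μ (d + 1) (d + m)) := by
    intro m
    rw [hookGradPairing_succ, elemGradPairing_succ, h]
  refine mul_left_cancel₀ (hne m) ?_
  rw [heigen, hstep]
  induction m with
  | zero =>
    rw [hookGradPairing_of_lt (by lia), hookPairing_of_lt (by lia), if_pos rfl]
    push_cast
    ring
  | succ m ih =>
    rw [← hstep, ← heigen] at ih
    rw [if_neg (Nat.succ_ne_zero m), ← add_assoc d m 1, ← heigen, mul_left_cancel₀ (hne m) ih]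
    push_cast
    ring

theorem elemGradPairing_sub_hookPairing {d : ℕ} (hd : d ≤ Fintype.card ι) (m : ℕ) :
    elemGradPairing μ d m - hookPairing μ d (d + m) =
      if m = 0 then (d : ℂ) - Fintype.card ι else 0 := by
  induction d generalizing m with
  | zero =>
    rw [elemGradPairing_zero, zero_add, hookPairing_zero]
    split_ifs <;> simp
  | succ d ih =>
    have hnext := hookPairing_succ_of_elemGradPairing hd (ih (by lia))
    rw [elemGradPairing_succ, ih (by lia), add_right_comm, hnext]
    cases m with
    | zero =>
      rw [hookPairing_of_lt (by lia), if_pos rfl, if_pos rfl]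
      push_cast
      ring
    | succ m =>
      rw [← add_assoc, hnext]
      simp

theorem hookPairing_eq_neg_one {d n : ℕ} (hd : d ≠ 0) (hdn : d ≤ n) (hcard : d ≤ Fintype.card ι) :
    hookPairing μ d n = -1 := by
  obtain ⟨d, rfl⟩ := Nat.exists_eq_succ_of_ne_zero hd
  obtain ⟨m, rfl⟩ := Nat.exists_eq_add_of_le hdn
  rw [Nat.succ_eq_add_one, add_right_comm]
  exact hookPairing_succ_of_elemGradPairing hcard (elemGradPairing_sub_hookPairing (by lia)) m

theorem integral_hook_mul_conj_hook_self {d n : ℕ} (hd : d ≠ 0) (hdn : d ≤ n)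
    (hcard : d ≤ Fintype.card ι) :
    ∫ g : unitaryGroup ι ℂ, hook g.1 d n * starRingEnd ℂ (hook g.1 d n) ∂μ = 1 := by
  have hint : ∀ e, Integrable
      (fun g : unitaryGroup ι ℂ => hook g.1 d n * starRingEnd ℂ (hook g.1 e n)) μ := fun e =>
    integrable_of_continuous ((hasGrad_hook d n).continuous.mul (hasGrad_hook e n).conj.continuous)
  have hpairing := hookPairing_eq_neg_one (μ := μ) hd hdn hcard
  simp only [hookPairing, trace_pow_eq_neg_sum_hook _ (by lia : n ≠ 0), map_neg, map_sum, mul_neg,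
    Finset.mul_sum] at hpairing
  rw [integral_neg, neg_inj, integral_finsetSum _ fun e _ => hint e,
    Finset.sum_eq_single_of_mem d (Finset.mem_Icc.mpr ⟨by lia, hdn⟩)] at hpairing
  · exact hpairing
  · intro e he hed
    exact integral_hook_mul_conj_hook_of_ne hdn (Finset.mem_Icc.mp he).2 hed.symm

theorem integral_hook_mul_conj_hook {d e n : ℕ} (hd : d ∈ Finset.Icc 1 (min n (Fintype.card ι)))
    (he : e ∈ Finset.Icc 1 (min n (Fintype.card ι))) :
    ∫ g : unitaryGroup ι ℂ, hook g.1 d n * starRingEnd ℂ (hook g.1 e n) ∂μ =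
      if d = e then 1 else 0 := by
  simp only [Finset.mem_Icc, le_min_iff] at hd he
  split_ifs with hde
  · subst hde
    exact integral_hook_mul_conj_hook_self (by lia) hd.2.1 hd.2.2
  · exact integral_hook_mul_conj_hook_of_ne hd.2.1 he.2.1 hde

end Pairing

/-- Lemma 2.2 (first part) of Rodgers, "The covariance of almost-primes in F_q[T]":
`∫_{U(N)} H_j^{(n)}(g) conj(H_k^{(n)}(g)) dg = Σ_{d=1}^{min(n,N)} (d^j−(d−1)^j)(d^k−(d−1)^k)`. -/
theorem integral_H_mul_conj_H (N j k n : ℕ) (hN : 1 ≤ N) (hj : 1 ≤ j) (hk : 1 ≤ k) (hn : 1 ≤ n)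
    (μ : Measure (Matrix.unitaryGroup (Fin N) ℂ)) [μ.IsHaarMeasure] [IsProbabilityMeasure μ] :
    ∫ g : Matrix.unitaryGroup (Fin N) ℂ,
        matH j n (g : Matrix (Fin N) (Fin N) ℂ) *
          (starRingEnd ℂ) (matH k n (g : Matrix (Fin N) (Fin N) ℂ)) ∂μ
      = ∑ d ∈ Finset.Icc 1 (min n N),
          ((d : ℂ) ^ j - ((d : ℂ) - 1) ^ j) * ((d : ℂ) ^ k - ((d : ℂ) - 1) ^ k) := by
  have hH := fun i (hi : 1 ≤ i) (g : unitaryGroup (Fin N) ℂ) =>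
    matH_eq_sum_hook g.1 (Nat.one_le_iff_ne_zero.mp hi) (Nat.one_le_iff_ne_zero.mp hn)
  have horth : ∀ d ∈ Finset.Icc 1 (min n N), ∀ e ∈ Finset.Icc 1 (min n N),
      ∫ g : unitaryGroup (Fin N) ℂ, hook g.1 d n * starRingEnd ℂ (hook g.1 e n) ∂μ =
        if d = e then 1 else 0 := fun d hd e he =>
    integral_hook_mul_conj_hook (by rwa [Fintype.card_fin]) (by rwa [Fintype.card_fin])
  simp only [hH j hj, hH k hk]
  rw [integral_sum_mul_conj_sum_of_orthonormal (fun d _ => (hasGrad_hook d n).continuous) horth]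
  simp only [map_sub, map_pow, map_one, map_natCast]
end

section
/- For all integers N ≥ 1, j ≥ 1, k ≥ 1 and n, m ≥ 1 with n ≠ m: ∫_{U(N)} H_j^{(n)}(g) · conj(H_k^{(m)}(g)) dg = 0, where the integral is with respect to Haar probability measure on U(N). -/
open Matrix MeasureTheory

/-!
Multiplying `g` by a scalar `z` of modulus one multiplies `H_j^{(n)}(g)` by `z ^ n`, hence the
integrand `H_j^{(n)}(g) * conj (H_k^{(m)}(g))` by `z ^ (n - m)`. As `n ≠ m`, some `z` satisfies
`z ^ (n - m) = -1`; left invariance of Haar measure then makes the integral equal to its negative.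
-/

open scoped ComplexConjugate

theorem exists_circle_zpow_eq_neg_one {d : ℤ} (hd : d ≠ 0) : ∃ z : Circle, z ^ d = -1 := by
  refine ⟨Circle.exp (Real.pi / d), ?_⟩
  rw [← Circle.exp_intCast_mul, mul_div_cancel₀ _ (Int.cast_ne_zero.mpr hd)]
  ext
  simp [Circle.coe_exp]

section Weight

variable {G : Type*} [Group G] [MeasurableSpace G] [MeasurableMul G] {μ : Measure G}
  [μ.IsMulLeftInvariant] {φ : Circle → G}

theorem integral_eq_zero_of_weight_ne_zero {E : Type*} [NormedAddCommGroup E] [NormedSpace ℂ E]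
    {f : G → E} {d : ℤ} (hd : d ≠ 0) (hf : ∀ z g, f (φ z * g) = z ^ d • f g) :
    ∫ g, f g ∂μ = 0 := by
  obtain ⟨z, hz⟩ := exists_circle_zpow_eq_neg_one hd
  refine integral_eq_zero_of_mul_left_eq_neg (g := φ z) fun g ↦ ?_
  rw [hf, hz, Circle.smul_def, Circle.coe_neg, Circle.coe_one, neg_one_smul]

theorem integral_inner_eq_zero_of_weight_ne {E : Type*} [NormedAddCommGroup E]
    [InnerProductSpace ℂ E] {f h : G → E} {n m : ℤ} (hnm : n ≠ m)
    (hf : ∀ z g, f (φ z * g) = z ^ n • f g) (hh : ∀ z g, h (φ z * g) = z ^ m • h g) :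
    ∫ g, inner ℂ (h g) (f g) ∂μ = 0 := by
  refine integral_eq_zero_of_weight_ne_zero (φ := φ) (sub_ne_zero.mpr hnm) fun z g ↦ ?_
  calc inner ℂ (h (φ z * g)) (f (φ z * g))
      = (z ^ n : Circle) * (conj ((z ^ m : Circle) : ℂ) * inner ℂ (h g) (f g)) := by
        rw [hf, hh, Circle.smul_def, Circle.smul_def, inner_smul_right, inner_smul_left]
    _ = z ^ (n - m) • inner ℂ (h g) (f g) := by
        rw [← Circle.coe_inv_eq_conj, ← mul_assoc, ← Circle.coe_mul, ← _root_.zpow_sub,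
          Circle.smul_def, smul_eq_mul]

end Weight

section CircleScalar

variable {A : Type*} [Ring A] [StarRing A] [Algebra ℂ A] [StarModule ℂ A]

/-- The scalar unitary `z • 1` of a complex star-algebra attached to a complex number `z` of modulus
one; in the unitary group `U(N)` these scalars form the centre. -/
def circleScalar (z : Circle) : unitary A :=
  ⟨(z : ℂ) • 1, by
    have hz : (z : ℂ) ∈ unitary ℂ := by simp [Unitary.mem_iff, ← Circle.coe_inv_eq_conj]
    exact Unitary.smul_mem_of_mem hz (one_mem _)⟩

theorem coe_circleScalar_mul (z : Circle) (g : unitary A) :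
    ((circleScalar z * g : unitary A) : A) = (z : ℂ) • (g : A) :=
  smul_one_mul (z : ℂ) (g : A)

end CircleScalar

theorem matH_smul {N : ℕ} (z : ℂ) (g : Matrix (Fin N) (Fin N) ℂ) :
    ∀ j n : ℕ, matH j n (z • g) = z ^ n * matH j n g
  | 0, n => by simp [matH]
  | 1, n => by simp [matH, smul_pow, Matrix.trace_smul]
  | j + 2, n => by
      simp only [matH, mul_add, Finset.mul_sum, matH_smul z g (j + 1), smul_pow,
        Matrix.trace_smul, smul_eq_mul]
      congr 1
      · refine Finset.sum_congr rfl fun l hl ↦ ?_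
        rw [← pow_sub_mul_pow z (Finset.mem_Ico.mp hl).2.le]
        ring
      · ring

theorem matH_circleScalar_mul {N : ℕ} (j n : ℕ) (z : Circle)
    (g : Matrix.unitaryGroup (Fin N) ℂ) :
    matH j n ((circleScalar z * g : Matrix.unitaryGroup (Fin N) ℂ) : Matrix (Fin N) (Fin N) ℂ) =
      z ^ (n : ℤ) • matH j n (g : Matrix (Fin N) (Fin N) ℂ) := by
  rw [coe_circleScalar_mul, matH_smul, zpow_natCast, Circle.smul_def, Circle.coe_pow, smul_eq_mul]

/-- Lemma 2.2 (second part) of Rodgers, "The covariance of almost-primes in F_q[T]":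
for `n ≠ m`, `∫_{U(N)} H_j^{(n)}(g) conj(H_k^{(m)}(g)) dg = 0`. -/
theorem integral_H_mul_conj_H_ne (N j k n m : ℕ) (hN : 1 ≤ N) (hj : 1 ≤ j) (hk : 1 ≤ k)
    (hn : 1 ≤ n) (hm : 1 ≤ m) (hnm : n ≠ m)
    (μ : Measure (Matrix.unitaryGroup (Fin N) ℂ)) [μ.IsHaarMeasure] [IsProbabilityMeasure μ] :
    ∫ g : Matrix.unitaryGroup (Fin N) ℂ,
        matH j n (g : Matrix (Fin N) (Fin N) ℂ) *
          (starRingEnd ℂ) (matH k m (g : Matrix (Fin N) (Fin N) ℂ)) ∂μ = 0 := by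
  simpa only [RCLike.inner_apply] using
    integral_inner_eq_zero_of_weight_ne (μ := μ) (φ := circleScalar)
      (f := fun g ↦ matH j n (g : Matrix (Fin N) (Fin N) ℂ))
      (h := fun g ↦ matH k m (g : Matrix (Fin N) (Fin N) ℂ))
      (Nat.cast_injective.ne hnm) (matH_circleScalar_mul j n) (matH_circleScalar_mul k m)
end
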